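/- Every maximal almost rigid representation of Q has exactly 2n+3 indecomposable direct summands (which are pairwise non-isomorphic, since the representation is basic). -/

import Mathlib

open scoped Classical

noncomputable section

namespace CambrianA

/-! ### Combinatorics of a type `A_{n+2}` quiver.

Vertices are `1, …, n+2`.  For `1 ≤ i ≤ n+1`, `ε i = true` means that the arrow between
`i` and `i+1` is oriented `i → i+1` (`i` is *upper-barred*), and `ε i = false` means it is
oriented `(i+1) → i` (`i` is *lower-barred*). -/

/-- `MaxIncr n ε i j` : the path `i → i+1 → ⋯ → j` is a maximal increasing path of `Q`. -/
def MaxIncr (n : ℕ) (ε : ℕ → Bool) (i j : ℕ) : Prop :=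
  1 ≤ i ∧ i ≤ j ∧ j ≤ n + 2 ∧ (∀ ℓ, i ≤ ℓ → ℓ < j → ε ℓ = true) ∧
    (i = 1 ∨ ε (i - 1) = false) ∧ (j = n + 2 ∨ ε j = false)

/-- `MaxDecr n ε i j` : the path `i → i-1 → ⋯ → j` is a maximal decreasing path of `Q`. -/
def MaxDecr (n : ℕ) (ε : ℕ → Bool) (i j : ℕ) : Prop :=
  1 ≤ j ∧ j ≤ i ∧ i ≤ n + 2 ∧ (∀ ℓ, j ≤ ℓ → ℓ < i → ε ℓ = false) ∧
    (i = n + 2 ∨ ε i = true) ∧ (j = 1 ∨ ε (j - 1) = true)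

/-- Vertices of the polygon lying on the lower boundary: `0`, `n+2` and lower-barred ones. -/
def LowerVertex (n : ℕ) (ε : ℕ → Bool) (x : ℕ) : Prop :=
  x = 0 ∨ x = n + 2 ∨ (1 ≤ x ∧ x ≤ n + 1 ∧ ε x = false)

/-- Vertices of the polygon lying on the upper boundary: `0`, `n+2` and upper-barred ones. -/
def UpperVertex (n : ℕ) (ε : ℕ → Bool) (x : ℕ) : Prop :=
  x = 0 ∨ x = n + 2 ∨ (1 ≤ x ∧ x ≤ n + 1 ∧ ε x = true)

/-- `(a,b)` is a lower boundary edge: `a < b` are consecutive lower vertices. -/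
def LowerEdge (n : ℕ) (ε : ℕ → Bool) (a b : ℕ) : Prop :=
  LowerVertex n ε a ∧ LowerVertex n ε b ∧ a < b ∧
    ∀ c, LowerVertex n ε c → ¬(a < c ∧ c < b)

/-- `(a,b)` is an upper boundary edge: `a < b` are consecutive upper vertices. -/
def UpperEdge (n : ℕ) (ε : ℕ → Bool) (a b : ℕ) : Prop :=
  UpperVertex n ε a ∧ UpperVertex n ε b ∧ a < b ∧
    ∀ c, UpperVertex n ε c → ¬(a < c ∧ c < b)

def BoundaryEdge (n : ℕ) (ε : ℕ → Bool) (a b : ℕ) : Prop :=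
  LowerEdge n ε a b ∨ UpperEdge n ε a b

/-- `IsHook n ε a lo hi` : the hook of the arrow of `Q` between `a` and `a+1` is the
maximal path supported on the interval `[lo, hi]`.
If `ε a = true` (arrow `a → a+1`, source `a`), the hook is the maximal decreasing path
starting at `a`; if `ε a = false` (arrow `a+1 → a`, source `a+1`), the hook is the
maximal increasing path starting at `a+1`. -/
def IsHook (n : ℕ) (ε : ℕ → Bool) (a lo hi : ℕ) : Prop :=
  if ε a = true then
    hi = a ∧ 1 ≤ lo ∧ lo ≤ a ∧ (∀ ℓ, lo ≤ ℓ → ℓ < a → ε ℓ = false) ∧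
      (lo = 1 ∨ ε (lo - 1) = true)
  else
    lo = a + 1 ∧ a + 1 ≤ hi ∧ hi ≤ n + 2 ∧ (∀ ℓ, a + 1 ≤ ℓ → ℓ < hi → ε ℓ = true) ∧
      (hi = n + 2 ∨ ε hi = false)

/-- `IsCohook n ε a lo hi` : the cohook of the arrow of `Q` between `a` and `a+1` is the
maximal path supported on the interval `[lo, hi]`, ending at the target of the arrow. -/
def IsCohook (n : ℕ) (ε : ℕ → Bool) (a lo hi : ℕ) : Prop :=
  if ε a = true then
    lo = a + 1 ∧ a + 1 ≤ hi ∧ hi ≤ n + 2 ∧ (∀ ℓ, a + 1 ≤ ℓ → ℓ < hi → ε ℓ = false) ∧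
      (hi = n + 2 ∨ ε hi = true)
  else
    hi = a ∧ 1 ≤ lo ∧ lo ≤ a ∧ (∀ ℓ, lo ≤ ℓ → ℓ < a → ε ℓ = true) ∧
      (lo = 1 ∨ ε (lo - 1) = false)

/-- Counterclockwise neighbor `R⁻¹(ℓ)` of the vertex `ℓ` of the polygon `P(Q)`, for the
cyclic order `0`, lower-barred vertices increasing, `n+2`, upper-barred vertices
decreasing. -/
def Rinv (n : ℕ) (ε : ℕ → Bool) (ℓ : ℕ) : ℕ :=
  if ℓ = n + 2 then sSup ({0} ∪ {x | 1 ≤ x ∧ x ≤ n + 1 ∧ ε x = true})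
  else if 1 ≤ ℓ ∧ ℓ ≤ n + 1 ∧ ε ℓ = true then
    sSup ({0} ∪ {x | 1 ≤ x ∧ x < ℓ ∧ ε x = true})
  else
    sInf ({n + 2} ∪ {x | ℓ < x ∧ x ≤ n + 1 ∧ ε x = false})

/-- `γ(i′,j′)` is a pivot of `γ(i,j)`. -/
def IsPivot (n : ℕ) (ε : ℕ → Bool) (i j i' j' : ℕ) : Prop :=
  (i' = Rinv n ε i ∧ j' = j ∧ Rinv n ε i < j) ∨
    (i' = i ∧ j' = Rinv n ε j ∧ i < Rinv n ε j)

/-! ### Geometry of the polygon `P(Q)`.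

The plane is identified with `ℂ`; `p x` is the vertex of the polygon labeled `x`,
for `0 ≤ x ≤ n+2`. -/

/-- The hypotheses on the points `p 0, …, p (n+2)` realizing the polygon `P(Q)`:
strictly increasing `x`-coordinates; `p 0` and `p (n+2)` on a common horizontal line `L`;
upper-barred vertices above `L`, lower-barred vertices below `L`; convex position. -/
def PolyPts (n : ℕ) (ε : ℕ → Bool) (p : ℕ → ℂ) : Prop :=
  (∀ a b, a < b → b ≤ n + 2 → (p a).re < (p b).re) ∧
    (p (n + 2)).im = (p 0).im ∧
    (∀ i, 1 ≤ i → i ≤ n + 1 →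
      (ε i = true → (p 0).im < (p i).im) ∧ (ε i = false → (p i).im < (p 0).im)) ∧
    ∀ i, i ≤ n + 2 → p i ∉ convexHull ℝ (p '' {j | j ≤ n + 2 ∧ j ≠ i})

/-- The line segment `γ(e.1, e.2)` of the polygon. -/
def Seg (p : ℕ → ℂ) (e : ℕ × ℕ) : Set ℂ := segment ℝ (p e.1) (p e.2)

/-- Two segments cross when they intersect in a point that is not a common endpoint. -/
def Cross (p : ℕ → ℂ) (e f : ℕ × ℕ) : Prop :=
  ∃ z, z ∈ Seg p e ∧ z ∈ Seg p f ∧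
    ¬((z = p e.1 ∨ z = p e.2) ∧ (z = p f.1 ∨ z = p f.2))

/-- Slope of the segment `γ(e.1, e.2)`. -/
def slope (p : ℕ → ℂ) (e : ℕ × ℕ) : ℝ :=
  ((p e.2).im - (p e.1).im) / ((p e.2).re - (p e.1).re)

def ValidPair (n : ℕ) (e : ℕ × ℕ) : Prop := e.1 < e.2 ∧ e.2 ≤ n + 2

/-- A triangulation of `P(Q)`: a maximal collection of pairwise noncrossing segments. -/
def IsTriangulation (n : ℕ) (p : ℕ → ℂ) (T : Finset (ℕ × ℕ)) : Prop :=
  (∀ e ∈ T, ValidPair n e) ∧ (∀ e ∈ T, ∀ f ∈ T, e ≠ f → ¬Cross p e f) ∧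
    ∀ e, ValidPair n e → e ∉ T → ∃ f ∈ T, Cross p e f

/-- Cross product of two planar vectors; positive iff `(u, v)` is counterclockwise. -/
def cross2 (u v : ℂ) : ℝ := u.re * v.im - u.im * v.re

/-- Arrows of the adjacency quiver `Q(T)` of a triangulation `T`: `e → f` whenever
`e` and `f` are sides of a common triangle of `T` and `f` follows `e` going
counterclockwise around that triangle. -/
def TriArrow (p : ℕ → ℂ) (T : Finset (ℕ × ℕ)) (e f : ℕ × ℕ) : Prop :=
  ∃ a b c : ℕ, a < b ∧ b < c ∧ (a, b) ∈ T ∧ (b, c) ∈ T ∧ (a, c) ∈ T ∧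
    ((0 < cross2 (p b - p a) (p c - p a) ∧
        ((e = (a, b) ∧ f = (b, c)) ∨ (e = (b, c) ∧ f = (a, c)) ∨
          (e = (a, c) ∧ f = (a, b)))) ∨
      (cross2 (p b - p a) (p c - p a) < 0 ∧
        ((e = (a, c) ∧ f = (b, c)) ∨ (e = (b, c) ∧ f = (a, b)) ∨
          (e = (a, b) ∧ f = (a, c)))))

/-! ### Representations of `Q` -/

/-- A finite dimensional representation of the quiver `Q` of type `A_{n+2}` over `k`.
The vector spaces are indexed by `ℕ`, and are required to vanish outside the set
`{1, …, n+2}` of vertices of `Q`.  For each `i`, `fwd i : V i → V (i+1)` is the structure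
map of the arrow `i → i+1` (it is required to vanish when the arrow is oriented in the
other direction, i.e. `ε i = false`) and `bwd i : V (i+1) → V i` is the structure map of
the arrow `i+1 → i` (required to vanish when `ε i = true`). -/
structure ARep (k : Type) [Field k] (n : ℕ) (ε : ℕ → Bool) where
  V : ℕ → Type
  [acg : ∀ x, AddCommGroup (V x)]
  [mod : ∀ x, Module k (V x)]
  [fdim : ∀ x, FiniteDimensional k (V x)]
  triv : ∀ x, x = 0 ∨ n + 2 < x → ∀ v : V x, v = 0
  fwd : ∀ i, V i →ₗ[k] V (i + 1)
  bwd : ∀ i, V (i + 1) →ₗ[k] V i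
  fwd_zero : ∀ i, ε i = false → fwd i = 0
  bwd_zero : ∀ i, ε i = true → bwd i = 0

attribute [instance] ARep.acg ARep.mod ARep.fdim

variable {k : Type} [Field k] {n : ℕ} {ε : ℕ → Bool}

/-- Morphisms of representations. -/
@[ext]
structure ARep.Hom (M N : ARep k n ε) where
  app : ∀ x, M.V x →ₗ[k] N.V x
  comm_fwd : ∀ i (v : M.V i), app (i + 1) (M.fwd i v) = N.fwd i (app i v)
  comm_bwd : ∀ i (v : M.V (i + 1)), app i (M.bwd i v) = N.bwd i (app (i + 1) v)

/-- The identity morphism. -/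
def ARep.Hom.id (M : ARep k n ε) : M.Hom M :=
  ⟨fun _ => LinearMap.id, fun _ _ => rfl, fun _ _ => rfl⟩

/-- Composition of morphisms. -/
def ARep.Hom.comp {M N P : ARep k n ε} (g : N.Hom P) (f : M.Hom N) : M.Hom P where
  app x := (g.app x).comp (f.app x)
  comm_fwd i v := by simp only [LinearMap.comp_apply, f.comm_fwd, g.comm_fwd]
  comm_bwd i v := by simp only [LinearMap.comp_apply, f.comm_bwd, g.comm_bwd]

/-- Sum of two morphisms. -/
def ARep.Hom.add {M N : ARep k n ε} (f g : M.Hom N) : M.Hom N where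
  app x := f.app x + g.app x
  comm_fwd i v := by
    simp only [LinearMap.add_apply, f.comm_fwd, g.comm_fwd, map_add]
  comm_bwd i v := by
    simp only [LinearMap.add_apply, f.comm_bwd, g.comm_bwd, map_add]

/-- Scalar multiple of a morphism. -/
def ARep.Hom.smul {M N : ARep k n ε} (c : k) (f : M.Hom N) : M.Hom N where
  app x := c • f.app x
  comm_fwd i v := by simp only [LinearMap.smul_apply, f.comm_fwd, map_smul]
  comm_bwd i v := by simp only [LinearMap.smul_apply, f.comm_bwd, map_smul]

/-- Isomorphism of representations. -/
def ARep.Iso (M N : ARep k n ε) : Prop :=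
  ∃ f : M.Hom N, ∀ x, Function.Bijective (f.app x)

/-- The zero representation(s). -/
def ARep.IsZero (M : ARep k n ε) : Prop := ∀ x, ∀ v : M.V x, v = 0

/-- The support of a representation. -/
def ARep.supp (M : ARep k n ε) : Set ℕ := {x | ∃ v : M.V x, v ≠ 0}

/-- Direct sum of two representations. -/
def ARep.dsum (M N : ARep k n ε) : ARep k n ε where
  V x := M.V x × N.V x
  acg _ := by infer_instance
  mod _ := by infer_instance
  fdim _ := by infer_instance
  triv x hx v := by
    have h1 := M.triv x hx v.1
    have h2 := N.triv x hx v.2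
    exact Prod.ext h1 h2
  fwd i := (M.fwd i).prodMap (N.fwd i)
  bwd i := (M.bwd i).prodMap (N.bwd i)
  fwd_zero i h := by
    show (M.fwd i).prodMap (N.fwd i) = 0
    rw [M.fwd_zero i h, N.fwd_zero i h]
    apply LinearMap.ext; rintro ⟨a, b⟩; simp
  bwd_zero i h := by
    show (M.bwd i).prodMap (N.bwd i) = 0
    rw [M.bwd_zero i h, N.bwd_zero i h]
    apply LinearMap.ext; rintro ⟨a, b⟩; simp

/-- One dimensional space `k` if `P` holds, `0` otherwise (as a submodule of `k`). -/
def fiber (k : Type) [Field k] (P : Prop) : Submodule k k := if P then ⊤ else ⊥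

/-- The canonical map `fiber k P → fiber k Q` : "identity" if `P ∧ Q`, zero otherwise. -/
def fiberMap (k : Type) [Field k] (P Q : Prop) : fiber k P →ₗ[k] fiber k Q :=
  if h : P ∧ Q then
    { toFun := fun v => ⟨(v : k), by
        rw [show fiber k Q = ⊤ from if_pos h.2]; exact Submodule.mem_top⟩
      map_add' := fun _ _ => rfl
      map_smul' := fun _ _ => rfl }
  else 0

/-- The zero representation. -/
def zeroRep (k : Type) [Field k] (n : ℕ) (ε : ℕ → Bool) : ARep k n ε where
  V _ := ↥(fiber k False)
  acg _ := by infer_instance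
  mod _ := by infer_instance
  fdim _ := by infer_instance
  triv x _ v := by
    have hfib : fiber k False = ⊥ := if_neg (fun h : False => h.elim)
    obtain ⟨w, hw⟩ := v
    apply Subtype.ext
    have hb : w ∈ (⊥ : Submodule k k) := hfib ▸ hw
    exact (Submodule.mem_bot k).mp hb
  fwd _ := 0
  bwd _ := 0
  fwd_zero _ _ := rfl
  bwd_zero _ _ := rfl

/-- The condition for a vertex `x` to be in the support of the interval representation
`M(i,j)`. -/
def SuppCond (n i j x : ℕ) : Prop := i ≤ x ∧ x ≤ j ∧ 1 ≤ x ∧ x ≤ n + 2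

/-- The interval (string) representation `M(i,j)` of `Q`: one dimensional at each vertex
`x` with `i ≤ x ≤ j`, zero elsewhere, with identity maps on all arrows whose endpoints
both lie in `[i,j]`. -/
def intervalRep (k : Type) [Field k] (n : ℕ) (ε : ℕ → Bool) (i j : ℕ) : ARep k n ε where
  V x := ↥(fiber k (SuppCond n i j x))
  acg _ := by infer_instance
  mod _ := by infer_instance
  fdim _ := by infer_instance
  triv x hx v := by
    have hP : ¬SuppCond n i j x := by simp only [SuppCond]; omega
    have hfib : fiber k (SuppCond n i j x) = ⊥ := if_neg hP
    obtain ⟨w, hw⟩ := v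
    apply Subtype.ext
    have hb : w ∈ (⊥ : Submodule k k) := hfib ▸ hw
    exact (Submodule.mem_bot k).mp hb
  fwd ℓ :=
    if ε ℓ = true then fiberMap k (SuppCond n i j ℓ) (SuppCond n i j (ℓ + 1)) else 0
  bwd ℓ :=
    if ε ℓ = true then 0 else fiberMap k (SuppCond n i j (ℓ + 1)) (SuppCond n i j ℓ)
  fwd_zero ℓ h := by simp [h]
  bwd_zero ℓ h := by simp [h]

/-- Direct sum of a list of representations. -/
def dsumList (k : Type) [Field k] (n : ℕ) (ε : ℕ → Bool) :
    List (ARep k n ε) → ARep k n ε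
  | [] => zeroRep k n ε
  | M :: L => M.dsum (dsumList k n ε L)

/-- Indecomposable representations. -/
def ARep.Indec (M : ARep k n ε) : Prop :=
  ¬M.IsZero ∧ ∀ A B : ARep k n ε, M.Iso (A.dsum B) → A.IsZero ∨ B.IsZero

/-- `A` is a direct summand of `T`. -/
def ARep.IsSummand (A T : ARep k n ε) : Prop := ∃ B : ARep k n ε, T.Iso (A.dsum B)

/-- A representation is basic when it has no repeated indecomposable direct summand. -/
def ARep.Basic (T : ARep k n ε) : Prop :=
  ∀ A : ARep k n ε, A.Indec → ¬(A.dsum A).IsSummand T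

/-- A short exact sequence `0 → B → E → A → 0`. -/
structure SES (B A : ARep k n ε) where
  E : ARep k n ε
  ι : B.Hom E
  π : E.Hom A
  inj : ∀ x, Function.Injective (ι.app x)
  surj : ∀ x, Function.Surjective (π.app x)
  exct : ∀ x (v : E.V x), π.app x v = 0 ↔ ∃ u, ι.app x u = v

/-- A short exact sequence splits. -/
def SES.Splits {B A : ARep k n ε} (σ : SES B A) : Prop :=
  ∃ r : σ.E.Hom B, ∀ x (v : B.V x), r.app x (σ.ι.app x v) = v

/-- `Ext¹(A, B) = 0` : every short exact sequence `0 → B → E → A → 0` splits. -/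
def ExtZero (A B : ARep k n ε) : Prop := ∀ σ : SES B A, σ.Splits

/-- `Ext¹(A,B) ≅ k`, generated by (the class of) a short exact sequence
`0 → B → E → A → 0` with indecomposable middle term `E`: there is a non-split such
sequence `σ` with `σ.E` indecomposable such that every non-split sequence is equivalent
to a nonzero scalar multiple of `σ`. -/
def ExtOneDimIndecMid (A B : ARep k n ε) : Prop :=
  ∃ σ : SES B A, ¬σ.Splits ∧ σ.E.Indec ∧
    ∀ τ : SES B A, ¬τ.Splits → ∃ c : k, c ≠ 0 ∧
      ∃ φ : σ.E.Hom τ.E, (∀ x, Function.Bijective (φ.app x)) ∧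
        (∀ x (v : B.V x), φ.app x (σ.ι.app x v) = τ.ι.app x v) ∧
        (∀ x (v : σ.E.V x), τ.π.app x (φ.app x v) = c • σ.π.app x v)

/-- Almost rigid representations. -/
def AlmostRigid (T : ARep k n ε) : Prop :=
  T.Basic ∧ ∀ A B : ARep k n ε, A.Indec → B.Indec → A.IsSummand T → B.IsSummand T →
    ExtZero A B ∨ ExtOneDimIndecMid A B

/-- Maximal almost rigid representations. -/
def MaxAlmostRigid (T : ARep k n ε) : Prop :=
  AlmostRigid T ∧ ∀ M : ARep k n ε, ¬M.IsZero → ¬AlmostRigid (T.dsum M)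

/-- `f` is a section. -/
def ARep.Hom.IsSection {M N : ARep k n ε} (f : M.Hom N) : Prop :=
  ∃ g : N.Hom M, ∀ x (v : M.V x), g.app x (f.app x v) = v

/-- `f` is a retraction. -/
def ARep.Hom.IsRetraction {M N : ARep k n ε} (f : M.Hom N) : Prop :=
  ∃ g : N.Hom M, ∀ x (v : N.V x), f.app x (g.app x v) = v

/-- Irreducible morphisms: `f` is neither a section nor a retraction, and in every
factorization `f = g ∘ h` either `h` is a section or `g` is a retraction. -/
def ARep.Hom.Irred {M N : ARep k n ε} (f : M.Hom N) : Prop :=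
  ¬f.IsSection ∧ ¬f.IsRetraction ∧
    ∀ (Z : ARep k n ε) (h : M.Hom Z) (g : Z.Hom N),
      (∀ x (v : M.V x), f.app x v = g.app x (h.app x v)) → h.IsSection ∨ g.IsRetraction

/-- Subrepresentations : families of subspaces closed under the structure maps. -/
structure Subrep (M : ARep k n ε) where
  U : ∀ x, Submodule k (M.V x)
  fwd_mem : ∀ i, ∀ v ∈ U i, M.fwd i v ∈ U (i + 1)
  bwd_mem : ∀ i, ∀ v ∈ U (i + 1), M.bwd i v ∈ U i

/-- The central charge `Z(M) = Σ_{x=1}^{n+2} dim_k(M_x) · (p_x − p_{x−1})`. -/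
def charge (p : ℕ → ℂ) (M : ARep k n ε) : ℂ :=
  ∑ x ∈ Finset.Icc 1 (n + 2), (Module.finrank k (M.V x) : ℂ) * (p x - p (x - 1))

/-- The central charge of a subrepresentation. -/
def subCharge (p : ℕ → ℂ) {M : ARep k n ε} (L : Subrep M) : ℂ :=
  ∑ x ∈ Finset.Icc 1 (n + 2), (Module.finrank k (L.U x) : ℂ) * (p x - p (x - 1))

/-- The representation `F(T) = ⊕_{γ(a,b) ∈ T} M(a+1, b)` attached to a collection `T` of
segments of the polygon `P(Q)`. -/
def FRep (k : Type) [Field k] (n : ℕ) (ε : ℕ → Bool) (T : Finset (ℕ × ℕ)) : ARep k n ε :=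
  dsumList k n ε (T.toList.map fun e => intervalRep k n ε (e.1 + 1) e.2)

end CambrianA

namespace CambrianA

variable {k : Type} [Field k] {n : ℕ} {ε : ℕ → Bool}

/-! ### Toolkit on representations -/

theorem hom_inv {M N : ARep k n ε} (f : M.Hom N)
    (hf : ∀ x, Function.Bijective (f.app x)) :
    ∃ g : N.Hom M, (∀ x v, g.app x (f.app x v) = v) ∧ (∀ x v, f.app x (g.app x v) = v) := by
  have h1 : ∀ x v, f.app x ((LinearEquiv.ofBijective (f.app x) (hf x)).symm v) = v := by
    intro x v
    exact (LinearEquiv.ofBijective (f.app x) (hf x)).apply_symm_apply v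
  refine ⟨⟨fun x => ((LinearEquiv.ofBijective (f.app x) (hf x)).symm : N.V x →ₗ[k] M.V x),
    ?_, ?_⟩, ?_, ?_⟩
  · intro i v
    apply (hf (i + 1)).1
    have := f.comm_fwd i ((LinearEquiv.ofBijective (f.app i) (hf i)).symm v)
    simp only [LinearEquiv.coe_coe]
    rw [this, h1, h1]
  · intro i v
    apply (hf i).1
    have := f.comm_bwd i ((LinearEquiv.ofBijective (f.app (i + 1)) (hf (i + 1))).symm v)
    simp only [LinearEquiv.coe_coe]
    rw [this, h1, h1]
  · intro x v
    exact (LinearEquiv.ofBijective (f.app x) (hf x)).symm_apply_apply v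
  · intro x v
    exact h1 x v

theorem bij_of_inv {M N : ARep k n ε} (f : M.Hom N) (g : N.Hom M)
    (h1 : ∀ x v, g.app x (f.app x v) = v) (h2 : ∀ x v, f.app x (g.app x v) = v) :
    ∀ x, Function.Bijective (f.app x) := fun x =>
  ⟨Function.LeftInverse.injective (g := g.app x) (h1 x),
    Function.RightInverse.surjective (g := g.app x) (h2 x)⟩

def fstHom (A B : ARep k n ε) : (A.dsum B).Hom A where
  app x := LinearMap.fst k (A.V x) (B.V x)
  comm_fwd _ _ := rfl
  comm_bwd _ _ := rfl

def sndHom (A B : ARep k n ε) : (A.dsum B).Hom B where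
  app x := LinearMap.snd k (A.V x) (B.V x)
  comm_fwd _ _ := rfl
  comm_bwd _ _ := rfl

/-- A map into a direct sum. -/
def pairHom {C A B : ARep k n ε} (f : C.Hom A) (g : C.Hom B) : C.Hom (A.dsum B) where
  app x := (f.app x).prod (g.app x)
  comm_fwd i v := Prod.ext (f.comm_fwd i v) (g.comm_fwd i v)
  comm_bwd i v := Prod.ext (f.comm_bwd i v) (g.comm_bwd i v)

/-- The zero map. -/
def zeroHom (A B : ARep k n ε) : A.Hom B where
  app x := 0
  comm_fwd i v := by simp
  comm_bwd i v := by simp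

def inlHom (A B : ARep k n ε) : A.Hom (A.dsum B) := pairHom (ARep.Hom.id A) (zeroHom A B)

def inrHom (A B : ARep k n ε) : B.Hom (A.dsum B) := pairHom (zeroHom B A) (ARep.Hom.id B)

/-- `A` is a retract of `T`. -/
def Ret (A T : ARep k n ε) : Prop :=
  ∃ q : A.Hom T, ∃ p : T.Hom A, ∀ x v, p.app x (q.app x v) = v

theorem Ret.trans {A B C : ARep k n ε} (h1 : Ret A B) (h2 : Ret B C) : Ret A C := by
  obtain ⟨q, p, h⟩ := h1
  obtain ⟨q', p', h'⟩ := h2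
  refine ⟨q'.comp q, p.comp p', fun x v => ?_⟩
  change p.app x (p'.app x (q'.app x (q.app x v))) = v
  rw [h', h]

theorem Ret.refl (A : ARep k n ε) : Ret A A :=
  ⟨ARep.Hom.id A, ARep.Hom.id A, fun _ _ => rfl⟩

theorem ret_of_iso {M N : ARep k n ε} (h : M.Iso N) : Ret M N ∧ Ret N M := by
  obtain ⟨f, hf⟩ := h
  obtain ⟨g, h1, h2⟩ := hom_inv f hf
  exact ⟨⟨f, g, h1⟩, ⟨g, f, h2⟩⟩

theorem Ret.dsum {A A' B B' : ARep k n ε} (h1 : Ret A A') (h2 : Ret B B') :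
    Ret (A.dsum B) (A'.dsum B') := by
  obtain ⟨q, p, h⟩ := h1
  obtain ⟨q', p', h'⟩ := h2
  refine ⟨pairHom (q.comp (fstHom A B)) (q'.comp (sndHom A B)),
    pairHom (p.comp (fstHom A' B')) (p'.comp (sndHom A' B')), fun x v => ?_⟩
  exact Prod.ext (h x v.1) (h' x v.2)

theorem ret_inl (A B : ARep k n ε) : Ret A (A.dsum B) :=
  ⟨inlHom A B, fstHom A B, fun _ _ => rfl⟩

theorem ret_inr (A B : ARep k n ε) : Ret B (A.dsum B) :=
  ⟨inrHom A B, sndHom A B, fun _ _ => rfl⟩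

theorem ret_swap (A B : ARep k n ε) : Ret (A.dsum B) (B.dsum A) :=
  ⟨pairHom (sndHom A B) (fstHom A B), pairHom (sndHom B A) (fstHom B A), fun _ _ => rfl⟩

/-- The kernel of a morphism. -/
def kerRep {M N : ARep k n ε} (f : M.Hom N) : ARep k n ε where
  V x := LinearMap.ker (f.app x)
  acg _ := by infer_instance
  mod _ := by infer_instance
  fdim _ := by infer_instance
  triv x hx v := Subtype.ext (M.triv x hx v)
  fwd i := (M.fwd i).restrict (p := LinearMap.ker (f.app i))
      (q := LinearMap.ker (f.app (i + 1))) (fun v hv => by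
    rw [LinearMap.mem_ker] at hv ⊢
    rw [f.comm_fwd, hv, map_zero])
  bwd i := (M.bwd i).restrict (p := LinearMap.ker (f.app (i + 1)))
      (q := LinearMap.ker (f.app i)) (fun v hv => by
    rw [LinearMap.mem_ker] at hv ⊢
    rw [f.comm_bwd, hv, map_zero])
  fwd_zero i h := by
    apply LinearMap.ext; intro v; apply Subtype.ext
    simp [LinearMap.restrict_apply, M.fwd_zero i h]
  bwd_zero i h := by
    apply LinearMap.ext; intro v; apply Subtype.ext
    simp [LinearMap.restrict_apply, M.bwd_zero i h]

/-- Corestriction to the kernel. -/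
def kerLift {C M N : ARep k n ε} (f : M.Hom N) (g : C.Hom M)
    (h : ∀ x v, f.app x (g.app x v) = 0) : C.Hom (kerRep f) where
  app x := (g.app x).codRestrict (LinearMap.ker (f.app x)) (fun v => h x v)
  comm_fwd i v := Subtype.ext (g.comm_fwd i v)
  comm_bwd i v := Subtype.ext (g.comm_bwd i v)

theorem isSummand_iff_ret {A T : ARep k n ε} : A.IsSummand T ↔ Ret A T := by
  constructor
  · rintro ⟨B, h⟩
    exact (ret_inl A B).trans (ret_of_iso h).2
  · rintro ⟨q, p, h⟩
    have hz : ∀ x v, p.app x (((ARep.Hom.id T).add ((q.comp p).smul (-1))).app x v) = 0 := by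
      intro x v
      change p.app x (v + (-1 : k) • q.app x (p.app x v)) = 0
      rw [map_add, map_smul, h]; simp
    refine ⟨kerRep p, pairHom p (kerLift p _ hz), fun x => ⟨?_, ?_⟩⟩
    · intro v w hvw
      have h1 : p.app x v = p.app x w := congrArg Prod.fst hvw
      have h2 : v + (-1 : k) • q.app x (p.app x v) = w + (-1 : k) • q.app x (p.app x w) :=
        congrArg Subtype.val (congrArg Prod.snd hvw)
      rw [h1] at h2
      exact add_right_cancel h2
    · rintro ⟨a, ⟨b, hb⟩⟩
      have hb' : p.app x b = 0 := hb
      refine ⟨q.app x a + b, Prod.ext ?_ (Subtype.ext ?_)⟩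
      · change p.app x (q.app x a + b) = a
        rw [map_add, h, hb', add_zero]
      · change (q.app x a + b) + (-1 : k) • q.app x (p.app x (q.app x a + b)) = b
        rw [map_add (p.app x), h, hb', add_zero]
        simp

/-- An idempotent endomorphism of an indecomposable is `0` or `1`. -/
theorem Indec.idem {M : ARep k n ε} (hM : M.Indec) (p : M.Hom M)
    (hp : ∀ x v, p.app x (p.app x v) = p.app x v) :
    (∀ x v, p.app x v = 0) ∨ (∀ x v, p.app x v = v) := by
  let r : M.Hom M := (ARep.Hom.id M).add (p.smul (-1))
  have hr : ∀ x v, r.app x v = v + (-1 : k) • p.app x v := fun _ _ => rfl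
  have h1 : ∀ x v, r.app x (p.app x v) = 0 := by
    intro x v; rw [hr, hp]; simp
  have h2 : ∀ x v, p.app x (r.app x v) = 0 := by
    intro x v; rw [hr, map_add, map_smul, hp]; simp
  have hiso : M.Iso ((kerRep r).dsum (kerRep p)) := by
    refine ⟨pairHom (kerLift r p h1) (kerLift p r h2), fun x => ⟨?_, ?_⟩⟩
    · intro v w hvw
      have e1 : p.app x v = p.app x w := congrArg Subtype.val (congrArg Prod.fst hvw)
      have e2 : r.app x v = r.app x w := congrArg Subtype.val (congrArg Prod.snd hvw)
      rw [hr, hr, e1] at e2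
      exact add_right_cancel e2
    · rintro ⟨⟨a, ha⟩, ⟨b, hb⟩⟩
      have ha0 : r.app x a = 0 := ha
      have ha' : p.app x a = a := by
        rw [hr] at ha0
        have : a = p.app x a := by
          rw [neg_one_smul, add_neg_eq_zero] at ha0; exact ha0
        exact this.symm
      have hb' : p.app x b = 0 := hb
      refine ⟨a + b, Prod.ext (Subtype.ext ?_) (Subtype.ext ?_)⟩
      · change p.app x (a + b) = a
        rw [map_add, ha', hb', add_zero]
      · change r.app x (a + b) = b
        rw [hr, map_add, ha', hb']; simp
  rcases hM.2 _ _ hiso with h | h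
  · left; intro x v
    exact congrArg Subtype.val (h x ⟨p.app x v, h1 x v⟩)
  · right; intro x v
    have := congrArg Subtype.val (h x ⟨r.app x v, h2 x v⟩)
    change r.app x v = 0 at this
    rw [hr, neg_one_smul, add_neg_eq_zero] at this
    exact this.symm

theorem exists_functional {V : Type} [AddCommGroup V] [Module k V] (p : Submodule k V) {v : V}
    (hv : v ∉ p) : ∃ c : V →ₗ[k] k, c v = 1 ∧ ∀ w ∈ p, c w = 0 := by
  obtain ⟨f, hf, hf'⟩ := Submodule.exists_dual_map_eq_bot_of_notMem hv inferInstance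
  refine ⟨(f v)⁻¹ • f, ?_, fun w hw => ?_⟩
  · simp [hf]
  · have : f w ∈ p.map f := Submodule.mem_map_of_mem hw
    rw [hf', Submodule.mem_bot] at this
    simp [this]

/-! ### Interval representations, intrinsically -/

/-- `e` is a family of vectors exhibiting `M` as an interval representation with
support `a+1, …, b`. -/
structure IsInt (M : ARep k n ε) (a b : ℕ) (e : ∀ x, M.V x) : Prop where
  span : ∀ x (v : M.V x), ∃ c : k, v = c • e x
  supp : ∀ x, e x ≠ 0 ↔ a < x ∧ x ≤ b
  fwd : ∀ i, ε i = true → a < i → M.fwd i (e i) = e (i + 1)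
  bwd : ∀ i, ε i = false → i < b → M.bwd i (e (i + 1)) = e i

section
variable {M : ARep k n ε} {a b : ℕ} {e : ∀ x, M.V x} 

theorem IsInt.zero (h : IsInt M a b e) {x : ℕ} (hx : ¬(a < x ∧ x ≤ b)) : e x = 0 := by
  by_contra h'; exact hx ((h.supp x).1 h')

theorem IsInt.vzero (h : IsInt M a b e) {x : ℕ} (hx : ¬(a < x ∧ x ≤ b)) (v : M.V x) : v = 0 := by
  obtain ⟨c, hc⟩ := h.span x v
  rw [hc, h.zero hx, smul_zero]

theorem IsInt.exists_coord (h : IsInt M a b e) :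
    ∃ c : ∀ x, M.V x →ₗ[k] k, (∀ x v, v = c x v • e x) ∧
      ∀ x, a < x → x ≤ b → c x (e x) = 1 := by
  have : ∀ x, ∃ c : M.V x →ₗ[k] k, (∀ v, v = c v • e x) ∧ (a < x → x ≤ b → c (e x) = 1) := by
    intro x
    by_cases hx : a < x ∧ x ≤ b
    · have h0 := (h.supp x).2 hx
      obtain ⟨c, hc, -⟩ := exists_functional (⊥ : Submodule k (M.V x)) (v := e x) (by simpa using h0)
      refine ⟨c, fun v => ?_, fun _ _ => hc⟩
      obtain ⟨t, ht⟩ := h.span x v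
      rw [ht, map_smul, hc]; simp
    · exact ⟨0, fun v => by simp [h.vzero hx v], fun h1 h2 => (hx ⟨h1, h2⟩).elim⟩
  choose c hc using this
  exact ⟨c, fun x => (hc x).1, fun x => (hc x).2⟩
end

end CambrianA

namespace CambrianA

variable {k : Type} [Field k] {n : ℕ} {ε : ℕ → Bool}

/-! ### Classification of indecomposables -/

/-- The walk to the right: dual families of vectors and functionals. -/
theorem walk (M : ARep k n ε) (m : ℕ) : ∀ y, n + 3 ≤ y + m → ∀ U L : Submodule k (M.V y),
    L ≤ U → (∃ u ∈ U, u ∉ L) →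
    ∃ j, y ≤ j ∧ ∃ e : ∀ z, M.V z, ∃ l : ∀ z, M.V z →ₗ[k] k,
      (∀ z, j < z → e z = 0 ∧ l z = 0) ∧
      (∀ i, y ≤ i → ε i = true → M.fwd i (e i) = e (i + 1)) ∧
      (∀ i, y ≤ i → i < j → ε i = true → ∀ v, l (i + 1) (M.fwd i v) = l i v) ∧
      (∀ i, y ≤ i → i < j → ε i = false → M.bwd i (e (i + 1)) = e i) ∧
      (∀ i, y ≤ i → ε i = false → ∀ v, l i (M.bwd i v) = l (i + 1) v) ∧
      l y (e y) = 1 ∧ e y ∈ U ∧ ∀ w ∈ L, l y w = 0 := by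
  -- the case of a family concentrated at `y`
  have single : ∀ y (U L : Submodule k (M.V y)) (v : M.V y) (c : M.V y →ₗ[k] k), v ∈ U →
      c v = 1 → (∀ w ∈ L, c w = 0) → (ε y = true → M.fwd y v = 0) →
      (ε y = false → ∀ w, c (M.bwd y w) = 0) →
      ∃ j, y ≤ j ∧ ∃ e : ∀ z, M.V z, ∃ l : ∀ z, M.V z →ₗ[k] k,
      (∀ z, j < z → e z = 0 ∧ l z = 0) ∧
      (∀ i, y ≤ i → ε i = true → M.fwd i (e i) = e (i + 1)) ∧
      (∀ i, y ≤ i → i < j → ε i = true → ∀ v, l (i + 1) (M.fwd i v) = l i v) ∧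
      (∀ i, y ≤ i → i < j → ε i = false → M.bwd i (e (i + 1)) = e i) ∧
      (∀ i, y ≤ i → ε i = false → ∀ v, l i (M.bwd i v) = l (i + 1) v) ∧
      l y (e y) = 1 ∧ e y ∈ U ∧ ∀ w ∈ L, l y w = 0 := by
    intro y U L v c hv hc hL h1 h2
    refine ⟨y, le_rfl, Function.update (fun _ => 0) y v, Function.update (fun _ => 0) y c,
      ?_, ?_, ?_, ?_, ?_, ?_, ?_, ?_⟩
    · intro z hz
      have : z ≠ y := by omega
      simp [this]
    · intro i hi he
      have h' : i + 1 ≠ y := by omega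
      rcases eq_or_ne i y with rfl | hne
      · simp [h1 he]
      · simp [h', hne]
    · intro i h h'; omega
    · intro i h h'; omega
    · intro i hi he w
      have h' : i + 1 ≠ y := by omega
      rcases eq_or_ne i y with rfl | hne
      · simp [h2 he]
      · simp [h', hne]
    · simp [hc]
    · simp [hv]
    · simpa using hL
  induction m with
  | zero =>
    intro y hy U L hLU ⟨u, hu, huL⟩
    exact absurd (by rw [M.triv y (by omega) u]; exact L.zero_mem) huL
  | succ m ih =>
    intro y hy U L hLU ⟨u, hu, huL⟩
    -- prolonging a family from `y+1` to `y`
    have prolong : ∀ (U' L' : Submodule k (M.V (y + 1))), L' ≤ U' → (∃ u ∈ U', u ∉ L') →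
        (∀ (v' : M.V (y + 1)) (c' : M.V (y + 1) →ₗ[k] k), v' ∈ U' → (∀ w ∈ L', c' w = 0) →
          c' v' = 1 →
          ∃ v ∈ U, ∃ c : M.V y →ₗ[k] k, (∀ w ∈ L, c w = 0) ∧ c v = 1 ∧
          (ε y = true → M.fwd y v = v' ∧ ∀ w, c' (M.fwd y w) = c w) ∧
          (ε y = false → M.bwd y v' = v ∧ ∀ w, c (M.bwd y w) = c' w)) →
      ∃ j, y ≤ j ∧ ∃ e : ∀ z, M.V z, ∃ l : ∀ z, M.V z →ₗ[k] k,
      (∀ z, j < z → e z = 0 ∧ l z = 0) ∧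
      (∀ i, y ≤ i → ε i = true → M.fwd i (e i) = e (i + 1)) ∧
      (∀ i, y ≤ i → i < j → ε i = true → ∀ v, l (i + 1) (M.fwd i v) = l i v) ∧
      (∀ i, y ≤ i → i < j → ε i = false → M.bwd i (e (i + 1)) = e i) ∧
      (∀ i, y ≤ i → ε i = false → ∀ v, l i (M.bwd i v) = l (i + 1) v) ∧
      l y (e y) = 1 ∧ e y ∈ U ∧ ∀ w ∈ L, l y w = 0 := by
      intro U' L' hLU' hne hst
      obtain ⟨j, hj, e, l, h0, h1, h2, h3, h4, h5, h6, h7⟩ := ih (y + 1) (by omega) U' L' hLU' hne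
      obtain ⟨v, hv, c, hc, hcv, hf, hb⟩ := hst _ _ h6 h7 h5
      refine ⟨j, by omega, Function.update e y v, Function.update l y c,
        ?_, ?_, ?_, ?_, ?_, ?_, ?_, ?_⟩
      · intro z hz
        have : z ≠ y := by omega
        simpa [this] using h0 z hz
      · intro i hi he
        have h' : i + 1 ≠ y := by omega
        rcases eq_or_ne i y with rfl | hne
        · simp [(hf he).1]
        · simp only [Function.update_of_ne h', Function.update_of_ne hne]
          exact h1 i (by omega) he
      · intro i hi hij he w
        have h' : i + 1 ≠ y := by omega
        rcases eq_or_ne i y with rfl | hne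
        · simp [(hf he).2]
        · simp only [Function.update_of_ne h', Function.update_of_ne hne]
          exact h2 i (by omega) hij he w
      · intro i hi hij he
        have h' : i + 1 ≠ y := by omega
        rcases eq_or_ne i y with rfl | hne
        · simp [(hb he).1]
        · simp only [Function.update_of_ne h', Function.update_of_ne hne]
          exact h3 i (by omega) hij he
      · intro i hi he w
        have h' : i + 1 ≠ y := by omega
        rcases eq_or_ne i y with rfl | hne
        · simp [(hb he).2]
        · simp only [Function.update_of_ne h', Function.update_of_ne hne]
          exact h4 i (by omega) he w
      · simp [hcv]
      · simp [hv]
      · simpa using hc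
    cases he : ε y with
    | true =>
      by_cases hk : ∃ v ∈ U, M.fwd y v = 0 ∧ v ∉ L
      · obtain ⟨v, hv, hv0, hvL⟩ := hk
        obtain ⟨c, hc1, hc2⟩ := exists_functional L hvL
        exact single y U L v c hv hc1 hc2 (fun _ => hv0) (fun h => by simp [he] at h)
      · push Not at hk
        refine prolong (U.map (M.fwd y)) (L.map (M.fwd y)) (Submodule.map_mono hLU) ?_ ?_
        · refine ⟨M.fwd y u, Submodule.mem_map_of_mem hu, ?_⟩
          rintro ⟨w, hw, hwu⟩
          have := hk (u - w) (U.sub_mem hu (hLU hw)) (by rw [map_sub, hwu, sub_self])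
          exact huL (by simpa using L.add_mem this hw)
        · intro v' c' hv' hc' h1
          obtain ⟨v, hv, rfl⟩ := hv'
          exact ⟨v, hv, c' ∘ₗ M.fwd y, fun w hw => hc' _ (Submodule.mem_map_of_mem hw), h1,
            fun _ => ⟨rfl, fun _ => rfl⟩, fun h => by simp [he] at h⟩
    | false =>
      by_cases hk : ∃ w, M.bwd y w ∈ U ∧ M.bwd y w ∉ L
      · obtain ⟨w, hw1, hw2⟩ := hk
        refine prolong (U.comap (M.bwd y)) (L.comap (M.bwd y))
          (Submodule.comap_mono hLU) ⟨w, hw1, hw2⟩ ?_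
        intro v' c' hv' hc' h1
        have hker : c' ∈ (LinearMap.ker (L.mkQ ∘ₗ M.bwd y)).dualAnnihilator := by
          rw [Submodule.mem_dualAnnihilator]
          intro w hw
          apply hc'
          simpa using hw
        rw [← LinearMap.range_dualMap_eq_dualAnnihilator_ker] at hker
        obtain ⟨g, hg⟩ := hker
        have hg' : ∀ w, g (L.mkQ (M.bwd y w)) = c' w := fun w => by rw [← hg]; rfl
        refine ⟨M.bwd y v', hv', g ∘ₗ L.mkQ, ?_, ?_, fun h => by simp [he] at h,
          fun _ => ⟨rfl, hg'⟩⟩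
        · intro w hw
          have : L.mkQ w = 0 := by simpa using hw
          simp only [LinearMap.comp_apply, this, map_zero]
        · exact (hg' v').trans h1
      · push Not at hk
        have hnot : u ∉ L ⊔ LinearMap.range (M.bwd y) := by
          intro hmem
          obtain ⟨x, hx, z, ⟨w, rfl⟩, hxz⟩ := Submodule.mem_sup.1 hmem
          have hz : M.bwd y w ∈ U := by
            have : M.bwd y w = u - x := by rw [← hxz]; abel
            rw [this]; exact U.sub_mem hu (hLU hx)
          exact huL (hxz ▸ L.add_mem hx (hk w hz))
        obtain ⟨c, hc1, hc2⟩ := exists_functional _ hnot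
        exact single y U L u c hu hc1 (fun w hw => hc2 w (Submodule.mem_sup_left hw))
          (fun h => by simp [he] at h)
          (fun _ w => hc2 _ (Submodule.mem_sup_right ⟨w, rfl⟩))

theorem Indec.isInt {M : ARep k n ε} (hM : M.Indec) :
    ∃ a b e, a < b ∧ b ≤ n + 2 ∧ IsInt M a b e := by
  have hex : ∃ x, ∃ v : M.V x, v ≠ 0 := by
    have := hM.1
    unfold ARep.IsZero at this
    push Not at this
    exact this
  let x := Nat.find hex
  obtain ⟨v, hv⟩ : ∃ v : M.V x, v ≠ 0 := Nat.find_spec hex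
  have hlt : ∀ z, z < x → ∀ w : M.V z, w = 0 := by
    intro z hz w
    by_contra hw
    exact Nat.find_min hex hz ⟨w, hw⟩
  clear_value x
  have hx0 : x ≠ 0 := by
    rintro rfl; exact hv (M.triv 0 (Or.inl rfl) v)
  obtain ⟨j, hj, e0, l, h0, h1, h2, h3, h4, h5, -, -⟩ :=
    walk M (n + 3) x (by omega) ⊤ ⊥ bot_le ⟨v, trivial, by simpa using hv⟩
  -- make `e0` vanish to the left of `x`: automatic
  have hl : ∀ z, z < x → ∀ w, l z w = 0 := fun z hz w => by rw [hlt z hz w, map_zero]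
  have hle : ∀ z, x ≤ z → z ≤ j → l z (e0 z) = 1 := by
    intro z hz
    induction z, hz using Nat.le_induction with
    | base => intro _; exact h5
    | succ z hz ih =>
      intro hzj
      have ih := ih (by omega)
      cases he : ε z with
      | true => rw [← h1 z hz he, h2 z hz (by omega) he, ih]
      | false => rw [← h4 z hz he, h3 z hz (by omega) he, ih]
  let p : M.Hom M :=
    { app := fun z => (l z).smulRight (e0 z)
      comm_fwd := by
        intro i w
        simp only [LinearMap.smulRight_apply, map_smul]
        cases he : ε i with
        | false => simp [M.fwd_zero i he]
        | true =>
          rcases lt_or_ge i x with hi | hi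
          · rw [hlt i hi w]; simp
          · rw [h1 i hi he]
            rcases lt_or_ge i j with hij | hij
            · rw [h2 i hi hij he]
            · rw [(h0 (i + 1) (by omega)).1]; simp
      comm_bwd := by
        intro i w
        simp only [LinearMap.smulRight_apply, map_smul]
        cases he : ε i with
        | true => simp [M.bwd_zero i he]
        | false =>
          rcases lt_or_ge i x with hi | hi
          · exact (hlt i hi _).trans (hlt i hi _).symm
          · rw [h4 i hi he]
            rcases lt_or_ge i j with hij | hij
            · rw [h3 i hi hij he]
            · rw [(h0 (i + 1) (by omega)).2]; simp }
  have hp : ∀ z w, p.app z w = l z w • e0 z := fun _ _ => rfl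
  have hid : ∀ z w, w = l z w • e0 z := by
    rcases Indec.idem hM p (by
      intro z w
      rw [hp, hp, map_smul]
      rcases lt_or_ge z x with hz | hz
      · exact (hlt z hz _).trans (hlt z hz _).symm
      · rcases le_or_gt z j with hzj | hzj
        · rw [hle z hz hzj]; simp
        · rw [(h0 z hzj).1]; simp) with h | h
    · exfalso
      have := h x (e0 x)
      rw [hp, h5, one_smul] at this
      rw [this, map_zero] at h5
      exact zero_ne_one h5
    · intro z w; exact (h z w).symm
  have hne : ∀ z, x ≤ z → z ≤ j → e0 z ≠ 0 := by
    intro z hz hzj h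
    have := hle z hz hzj
    rw [h, map_zero] at this
    exact zero_ne_one this
  refine ⟨x - 1, j, e0, by omega, ?_, ?_, ?_, ?_, ?_⟩
  · by_contra hcon
    exact hne j hj le_rfl (M.triv j (Or.inr (by omega)) _)
  · exact fun z w => ⟨_, hid z w⟩
  · intro z
    constructor
    · intro hz
      by_contra hcon
      rcases lt_or_ge z x with h | h
      · exact hz (hlt z h _)
      · exact hz (h0 z (by omega)).1
    · intro hz; exact hne z (by omega) hz.2
  · intro i he hi; exact h1 i (by omega) he
  · intro i he hi
    rcases lt_or_ge i x with h | h
    · exact (hlt i h _).trans (hlt i h _).symm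
    · exact h3 i h hi he

/-- Endomorphisms of interval representations are scalars. -/
theorem IsInt.endo {M : ARep k n ε} {a b : ℕ} {e : ∀ x, M.V x} (h : IsInt M a b e)
    (f : M.Hom M) : ∃ c : k, ∀ x v, f.app x v = c • v := by
  choose t ht using fun x => h.span x (f.app x (e x))
  have hstep : ∀ m, a + 1 + m ≤ b → t (a + 1 + m) = t (a + 1) := by
    intro m
    induction m with
    | zero => intro _; rfl
    | succ m ih =>
      intro hm
      rw [← ih (by omega)]
      cases he : ε (a + 1 + m) with
      | true =>
        have h1 := f.comm_fwd (a + 1 + m) (e (a + 1 + m))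
        rw [h.fwd _ he (by omega), ht, ht, map_smul, h.fwd _ he (by omega)] at h1
        exact smul_left_injective k ((h.supp (a + 1 + m + 1)).2 ⟨by omega, by omega⟩) h1
      | false =>
        have h1 := f.comm_bwd (a + 1 + m) (e (a + 1 + m + 1))
        rw [h.bwd _ he (by omega), ht, ht, map_smul, h.bwd _ he (by omega)] at h1
        exact (smul_left_injective k ((h.supp (a + 1 + m)).2 ⟨by omega, by omega⟩) h1).symm
  refine ⟨t (a + 1), fun x v => ?_⟩
  by_cases hx : a < x ∧ x ≤ b
  · obtain ⟨m, rfl⟩ : ∃ m, x = a + 1 + m := ⟨x - (a + 1), by omega⟩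
    obtain ⟨c, rfl⟩ := h.span _ v
    rw [map_smul, ht, hstep m hx.2, smul_comm]
  · exact (h.vzero hx _).trans (h.vzero hx _).symm

theorem IsInt.indec {M : ARep k n ε} {a b : ℕ} {e : ∀ x, M.V x} (h : IsInt M a b e)
    (hab : a < b) : M.Indec := by
  have hb := (h.supp b).2 ⟨hab, le_rfl⟩
  refine ⟨fun hz => hb (hz b _), ?_⟩
  rintro A B ⟨f, hf⟩
  obtain ⟨g, hgf, hfg⟩ := hom_inv f hf
  obtain ⟨c, hc⟩ := h.endo (g.comp ((inlHom A B).comp ((fstHom A B).comp f)))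
  have key : ∀ x (z : (A.dsum B).V x), (inlHom A B).app x ((fstHom A B).app x z) = c • z := by
    intro x z
    have h1 := hc x (g.app x z)
    change g.app x ((inlHom A B).app x ((fstHom A B).app x (f.app x (g.app x z)))) = _ at h1
    rw [hfg] at h1
    have h2 := congrArg (f.app x) h1
    rw [hfg, map_smul, hfg] at h2
    exact h2
  by_cases h0 : c = 0
  · left; intro x u
    have : u = c • u := congrArg Prod.fst (key x (u, 0))
    simpa [h0] using this
  · right; intro x w
    have : 0 = c • w := congrArg Prod.snd (key x (0, w))
    simpa [h0] using this.symm

/-- Two interval representations with the same support are isomorphic. -/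
theorem IsInt.iso {M N : ARep k n ε} {a b : ℕ} {e : ∀ x, M.V x} {e' : ∀ x, N.V x}
    (h : IsInt M a b e) (h' : IsInt N a b e') : M.Iso N := by
  obtain ⟨c, hc, hc1⟩ := h.exists_coord
  have hfe : ∀ x, (c x).smulRight (e' x) (e x) = e' x := by
    intro x
    by_cases hx : a < x ∧ x ≤ b
    · simp [hc1 x hx.1 hx.2]
    · exact (h'.vzero hx _).trans (h'.vzero hx _).symm
  refine ⟨⟨fun x => (c x).smulRight (e' x), ?_, ?_⟩, ?_⟩
  · intro i v
    obtain ⟨t, rfl⟩ := h.span i v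
    simp only [map_smul, hfe]
    congr 1
    cases he : ε i with
    | false => simp [M.fwd_zero i he, N.fwd_zero i he]
    | true =>
      rcases lt_or_ge a i with hi | hi
      · rw [h.fwd i he hi, h'.fwd i he hi, hfe]
      · rw [h.zero (x := i) (by omega), h'.zero (x := i) (by omega)]; simp
  · intro i v
    obtain ⟨t, rfl⟩ := h.span (i + 1) v
    simp only [map_smul, hfe]
    congr 1
    cases he : ε i with
    | true => simp [M.bwd_zero i he, N.bwd_zero i he]
    | false =>
      rcases lt_or_ge i b with hi | hi
      · rw [h.bwd i he hi, h'.bwd i he hi, hfe]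
      · rw [h.zero (x := i + 1) (by omega), h'.zero (x := i + 1) (by omega)]; simp
  · intro x
    by_cases hx : a < x ∧ x ≤ b
    · constructor
      · intro v w hvw
        have : c x v = c x w := smul_left_injective k ((h'.supp x).2 hx) hvw
        rw [hc x v, hc x w, this]
      · intro w
        obtain ⟨t, rfl⟩ := h'.span x w
        exact ⟨t • e x, by rw [map_smul, hfe]⟩
    · exact ⟨fun v w _ => (h.vzero hx v).trans (h.vzero hx w).symm,
        fun w => ⟨0, (h'.vzero hx _).trans (h'.vzero hx _).symm⟩⟩

theorem intervalRep_isInt (a b : ℕ) (hb : b ≤ n + 2) :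
    ∃ e, IsInt (intervalRep k n ε (a + 1) b) a b e := by
  have hiff : ∀ x, SuppCond n (a + 1) b x ↔ a < x ∧ x ≤ b := by
    intro x; unfold SuppCond; omega
  have htop : ∀ x, (a < x ∧ x ≤ b) → fiber k (SuppCond n (a + 1) b x) = ⊤ :=
    fun x hx => if_pos ((hiff x).2 hx)
  have hbot : ∀ x, ¬(a < x ∧ x ≤ b) → fiber k (SuppCond n (a + 1) b x) = ⊥ :=
    fun x hx => if_neg (fun h => hx ((hiff x).1 h))
  have hz : ∀ x, ¬(a < x ∧ x ≤ b) → ∀ v : (intervalRep k n ε (a + 1) b).V x, v = 0 := by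
    rintro x hx ⟨v, hv⟩
    have hv' : v ∈ fiber k (SuppCond n (a + 1) b x) := hv
    rw [hbot x hx] at hv'
    exact Subtype.ext ((Submodule.mem_bot k).1 hv')
  let e : ∀ x, (intervalRep k n ε (a + 1) b).V x := fun x =>
    if hx : a < x ∧ x ≤ b then
      (⟨1, by rw [htop x hx]; trivial⟩ : fiber k (SuppCond n (a + 1) b x)) else 0
  have he1 : ∀ x (hx : a < x ∧ x ≤ b), e x =
    (⟨1, by rw [htop x hx]; trivial⟩ : fiber k (SuppCond n (a + 1) b x)) := fun x hx => dif_pos hx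
  refine ⟨e, ?_, ?_, ?_, ?_⟩
  · intro x v
    by_cases hx : a < x ∧ x ≤ b
    · refine ⟨(show fiber k (SuppCond n (a + 1) b x) from v).1, ?_⟩
      rw [he1 x hx]
      apply Subtype.ext
      change _ = _ • (1 : k)
      simp
    · exact ⟨0, (hz x hx _).trans (hz x hx _).symm⟩
  · intro x
    constructor
    · intro h
      by_contra hx
      exact h (hz x hx _)
    · intro hx h
      rw [he1 x hx] at h
      have : (1 : k) = 0 := congrArg Subtype.val h
      exact one_ne_zero this
  · intro i hε hi
    by_cases hi2 : i + 1 ≤ b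
    · rw [he1 i ⟨hi, by omega⟩, he1 (i + 1) ⟨by omega, hi2⟩]
      have hh : SuppCond n (a + 1) b i ∧ SuppCond n (a + 1) b (i + 1) :=
        ⟨(hiff _).2 ⟨hi, by omega⟩, (hiff _).2 ⟨by omega, hi2⟩⟩
      simp only [intervalRep, hε, if_true, fiberMap, dif_pos hh]
      rfl
    · exact (hz (i + 1) (by omega) _).trans (hz (i + 1) (by omega) _).symm
  · intro i hε hi
    by_cases hi2 : a < i
    · rw [he1 i ⟨hi2, by omega⟩, he1 (i + 1) ⟨by omega, hi⟩]
      have hh : SuppCond n (a + 1) b (i + 1) ∧ SuppCond n (a + 1) b i :=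
        ⟨(hiff _).2 ⟨by omega, hi⟩, (hiff _).2 ⟨hi2, by omega⟩⟩
      simp only [intervalRep, hε, fiberMap, dif_pos hh]
      rfl
    · exact (hz i (by omega) _).trans (hz i (by omega) _).symm

end CambrianA

namespace CambrianA

variable {k : Type} [Field k] {n : ℕ} {ε : ℕ → Bool}

/-! ### Krull-Schmidt arguments -/

theorem zeroRep_isZero : (zeroRep k n ε).IsZero := by
  rintro x ⟨v, hv⟩
  have hfib : fiber k False = ⊥ := if_neg (fun h : False => h.elim)
  have hb : v ∈ (⊥ : Submodule k k) := hfib ▸ hv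
  exact Subtype.ext ((Submodule.mem_bot k).mp hb)

/-- `p ∘ q` is multiplication by `c`. -/
def Scal {A D : ARep k n ε} (p : D.Hom A) (q : A.Hom D) (c : k) : Prop :=
  ∀ x v, p.app x (q.app x v) = c • v

theorem scal_unique {A : ARep k n ε} (hA : ¬A.IsZero) {c d : k}
    (h : ∀ x (v : A.V x), c • v = d • v) : c = d := by
  unfold ARep.IsZero at hA
  push Not at hA
  obtain ⟨x, v, hv⟩ := hA
  exact smul_left_injective k hv (h x v)

theorem IsInt.scal {A D : ARep k n ε} {a b : ℕ} {e : ∀ x, A.V x} (h : IsInt A a b e)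
    (p : D.Hom A) (q : A.Hom D) : ∃ c, Scal p q c := h.endo (p.comp q)

/-- Decomposition of a composite through a direct sum. -/
theorem scal_dsum {A M D : ARep k n ε} (hA : ¬A.IsZero) (p : (M.dsum D).Hom A)
    (q : A.Hom (M.dsum D)) {c c1 c2 : k} (h : Scal p q c)
    (h1 : Scal (p.comp (inlHom M D)) ((fstHom M D).comp q) c1)
    (h2 : Scal (p.comp (inrHom M D)) ((sndHom M D).comp q) c2) : c = c1 + c2 := by
  apply scal_unique hA
  intro x v
  rw [add_smul, ← h x v, ← h1 x v, ← h2 x v]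
  change _ = p.app x ((q.app x v).1, 0) + p.app x (0, (q.app x v).2)
  have := map_add (p.app x) ((q.app x v).1, 0) (0, (q.app x v).2)
  refine Eq.trans ?_ this
  congr 1
  refine Prod.ext ?_ ?_
  · exact (add_zero _).symm
  · exact (zero_add _).symm

theorem ks_one {A : ARep k n ε} {a b : ℕ} {e : ∀ x, A.V x} (h : IsInt A a b e) (hA : ¬A.IsZero)
    (L : List (ARep k n ε)) : ∀ (p : (dsumList k n ε L).Hom A) (q : A.Hom (dsumList k n ε L))
    (c : k), Scal p q c → c ≠ 0 →
    ∃ M ∈ L, ∃ (p' : M.Hom A) (q' : A.Hom M) (c' : k), Scal p' q' c' ∧ c' ≠ 0 := by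
  induction L with
  | nil =>
    intro p q c hc hc0
    refine absurd (scal_unique hA (d := 0) fun x v => ?_) hc0
    rw [← hc x v, show q.app x v = 0 from zeroRep_isZero x _, map_zero, zero_smul]
  | cons M L ih =>
    intro p q c hc hc0
    obtain ⟨c1, h1⟩ := h.scal (p.comp (inlHom M (dsumList k n ε L)))
      ((fstHom M (dsumList k n ε L)).comp q)
    obtain ⟨c2, h2⟩ := h.scal (p.comp (inrHom M (dsumList k n ε L)))
      ((sndHom M (dsumList k n ε L)).comp q)
    have hs := scal_dsum hA p q hc h1 h2
    by_cases h0 : c1 = 0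
    · obtain ⟨N, hN, r⟩ := ih _ _ c2 h2 (by rintro rfl; exact hc0 (by rw [hs, h0, zero_add]))
      exact ⟨N, List.mem_cons_of_mem _ hN, r⟩
    · exact ⟨M, List.mem_cons_self, _, _, c1, h1, h0⟩

/-- The support determines the endpoints. -/
theorem endpoints_eq {a b a' b' : ℕ} (hab : a < b) (hab' : a' < b')
    (h : ∀ x, (a < x ∧ x ≤ b) ↔ (a' < x ∧ x ≤ b')) : a = a' ∧ b = b' := by
  have h1 := (h (a + 1)).1 ⟨by omega, by omega⟩
  have h2 := (h b).1 ⟨by omega, by omega⟩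
  have h3 := (h (a' + 1)).2 ⟨by omega, by omega⟩
  have h4 := (h b').2 ⟨by omega, by omega⟩
  omega

theorem same_type {A M : ARep k n ε} {a b a' b' : ℕ} {e : ∀ x, A.V x} {e' : ∀ x, M.V x}
    (h : IsInt A a b e) (h' : IsInt M a' b' e') (hab : a < b) (hab' : a' < b')
    {p : M.Hom A} {q : A.Hom M} {c : k} (hs : Scal p q c) (hc : c ≠ 0) :
    a = a' ∧ b = b' := by
  have hinj : ∀ x v, q.app x v = 0 → v = 0 := by
    intro x v hv
    have := hs x v
    rw [hv, map_zero] at this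
    exact (smul_eq_zero.1 this.symm).resolve_left hc
  obtain ⟨d, hd⟩ := h'.endo (q.comp p)
  have hd' : ∀ x v, q.app x (p.app x v) = d • v := hd
  have hdc : d = c := by
    have hb := (h.supp b).2 ⟨hab, le_rfl⟩
    have h1 : q.app b (e b) ≠ 0 := fun h0 => hb (hinj b _ h0)
    have h2 := hd' b (q.app b (e b))
    rw [hs, map_smul] at h2
    exact (smul_left_injective k h1 h2).symm
  have hinj' : ∀ x v, p.app x v = 0 → v = 0 := by
    intro x v hv
    have := hd' x v
    rw [hv, map_zero] at this
    exact (smul_eq_zero.1 this.symm).resolve_left (hdc ▸ hc)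
  apply endpoints_eq hab hab'
  intro x
  constructor
  · intro hx
    by_contra hx'
    exact (h.supp x).2 hx (hinj x _ (h'.vzero hx' _))
  · intro hx
    by_contra hx'
    exact (h'.supp x).2 hx (hinj' x _ (h.vzero hx' _))

theorem det_one {A M : ARep k n ε} {a' b' : ℕ} {e' : ∀ x, M.V x}
    (h' : IsInt M a' b' e') (hA : ¬A.IsZero) {p1 p2 : M.Hom A} {q1 q2 : A.Hom M} {α β γ δ : k}
    (hα : Scal p1 q1 α) (hβ : Scal p2 q2 β) (hγ : Scal p1 q2 γ) (hδ : Scal p2 q1 δ) :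
    α * β = γ * δ := by
  obtain ⟨t, ht⟩ := h'.endo (q1.comp p2)
  have ht' : ∀ x v, q1.app x (p2.app x v) = t • v := ht
  have e1 : α * β = t * γ := by
    apply scal_unique hA
    intro x v
    have h1 := congrArg (p1.app x) (ht' x (q2.app x v))
    rw [hβ, map_smul, map_smul, map_smul, hα, hγ] at h1
    rw [mul_comm, mul_smul, mul_smul]; exact h1
  by_cases hq : ∀ x v, q1.app x v = 0
  · have hα0 : α = 0 := scal_unique hA fun x v => by rw [← hα x v, hq, map_zero, zero_smul]
    have hδ0 : δ = 0 := scal_unique hA fun x v => by rw [← hδ x v, hq, map_zero, zero_smul]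
    rw [hα0, hδ0]; ring
  · push Not at hq
    obtain ⟨x, v, hv⟩ := hq
    have h1 := ht' x (q1.app x v)
    rw [hδ, map_smul] at h1
    have : δ = t := smul_left_injective k hv h1
    rw [e1, this]; ring

theorem det_list (ty : ARep k n ε → ℕ × ℕ) {A : ARep k n ε} {a b : ℕ} {e : ∀ x, A.V x}
    (h : IsInt A a b e) (hab : a < b) (hA : ¬A.IsZero) (L : List (ARep k n ε))
    (hL : ∀ M ∈ L, (ty M).1 < (ty M).2 ∧ ∃ e, IsInt M (ty M).1 (ty M).2 e)
    (hnd : (L.map ty).Nodup) :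
    ∀ (p1 p2 : (dsumList k n ε L).Hom A) (q1 q2 : A.Hom (dsumList k n ε L)) (α β γ δ : k),
    Scal p1 q1 α → Scal p2 q2 β → Scal p1 q2 γ → Scal p2 q1 δ → α * β = γ * δ := by
  induction L with
  | nil =>
    intro p1 p2 q1 q2 α β γ δ hα hβ hγ hδ
    have hα0 : α = 0 := scal_unique hA fun x v => by
      rw [← hα x v, show q1.app x v = 0 from zeroRep_isZero x _, map_zero, zero_smul]
    have hδ0 : δ = 0 := scal_unique hA fun x v => by
      rw [← hδ x v, show q1.app x v = 0 from zeroRep_isZero x _, map_zero, zero_smul]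
    rw [hα0, hδ0]; ring
  | cons M L ih =>
    intro p1 p2 q1 q2 α β γ δ hα hβ hγ hδ
    have hnd' := hnd
    rw [List.map_cons, List.nodup_cons] at hnd
    obtain ⟨hM1, eM, hM⟩ := hL M List.mem_cons_self
    have hL' : ∀ N ∈ L, (ty N).1 < (ty N).2 ∧ ∃ e, IsInt N (ty N).1 (ty N).2 e :=
      fun N hN => hL N (List.mem_cons_of_mem _ hN)
    have dec : ∀ (p : (M.dsum (dsumList k n ε L)).Hom A) (q : A.Hom (M.dsum (dsumList k n ε L)))
        (c : k), Scal p q c → ∃ c1 c2, c = c1 + c2 ∧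
        Scal (p.comp (inlHom M (dsumList k n ε L))) ((fstHom M (dsumList k n ε L)).comp q) c1 ∧
        Scal (p.comp (inrHom M (dsumList k n ε L))) ((sndHom M (dsumList k n ε L)).comp q) c2 ∧
        (ty M = (a, b) → c2 = 0) ∧ (ty M ≠ (a, b) → c1 = 0) := by
      intro p q c hc
      obtain ⟨c1, h1⟩ := h.scal (p.comp (inlHom M (dsumList k n ε L)))
        ((fstHom M (dsumList k n ε L)).comp q)
      obtain ⟨c2, h2⟩ := h.scal (p.comp (inrHom M (dsumList k n ε L)))
        ((sndHom M (dsumList k n ε L)).comp q)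
      refine ⟨c1, c2, scal_dsum hA p q hc h1 h2, h1, h2, ?_, ?_⟩
      · intro hty
        by_contra hc2
        obtain ⟨N, hN, p', q', c', hs, hc'⟩ := ks_one h hA L _ _ c2 h2 hc2
        obtain ⟨hN1, eN, hN2⟩ := hL' N hN
        obtain ⟨e1, e2⟩ := same_type h hN2 hab hN1 hs hc'
        apply hnd.1
        rw [hty, List.mem_map]
        exact ⟨N, hN, Prod.ext e1.symm e2.symm⟩
      · intro hty
        by_contra hc1
        obtain ⟨e1, e2⟩ := same_type h hM hab hM1 h1 hc1
        exact hty (Prod.ext e1.symm e2.symm)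
    obtain ⟨α1, α2, rfl, ha1, ha2, ha3, ha4⟩ := dec p1 q1 α hα
    obtain ⟨β1, β2, rfl, hb1, hb2, hb3, hb4⟩ := dec p2 q2 β hβ
    obtain ⟨γ1, γ2, rfl, hc1, hc2, hc3, hc4⟩ := dec p1 q2 γ hγ
    obtain ⟨δ1, δ2, rfl, hd1, hd2, hd3, hd4⟩ := dec p2 q1 δ hδ
    by_cases hty : ty M = (a, b)
    · rw [ha3 hty, hb3 hty, hc3 hty, hd3 hty]
      simpa using det_one hM hA ha1 hb1 hc1 hd1
    · rw [ha4 hty, hb4 hty, hc4 hty, hd4 hty]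
      simpa using ih hL' hnd.2 _ _ _ _ _ _ _ _ ha2 hb2 hc2 hd2

/-- Sums of pairwise distinct intervals are basic. -/
theorem basic_of_ret (ty : ARep k n ε → ℕ × ℕ) (L : List (ARep k n ε))
    (hL : ∀ M ∈ L, (ty M).1 < (ty M).2 ∧ ∃ e, IsInt M (ty M).1 (ty M).2 e)
    (hnd : (L.map ty).Nodup) {T : ARep k n ε} (hT : Ret T (dsumList k n ε L)) : T.Basic := by
  intro A hA hsum
  obtain ⟨a, b, e, hab, -, h⟩ := Indec.isInt hA
  obtain ⟨q, p, hpq⟩ := (isSummand_iff_ret.1 hsum).trans hT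
  have := det_list ty h hab hA.1 L hL hnd ((fstHom A A).comp p) ((sndHom A A).comp p)
    (q.comp (inlHom A A)) (q.comp (inrHom A A)) 1 1 0 0
    (fun x v => by
      have := congrArg Prod.fst (hpq x (v, 0)); rw [one_smul]; exact this)
    (fun x v => by
      have := congrArg Prod.snd (hpq x (0, v)); rw [one_smul]; exact this)
    (fun x v => by
      have := congrArg Prod.fst (hpq x (0, v)); rw [zero_smul]; exact this)
    (fun x v => by
      have := congrArg Prod.snd (hpq x (v, 0)); rw [zero_smul]; exact this)
  simp at this

/-- Indecomposable summands are among the given ones. -/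
theorem type_of_ret (ty : ARep k n ε → ℕ × ℕ) (L : List (ARep k n ε))
    (hL : ∀ M ∈ L, (ty M).1 < (ty M).2 ∧ ∃ e, IsInt M (ty M).1 (ty M).2 e)
    {A : ARep k n ε} (hA : Ret A (dsumList k n ε L)) {a b : ℕ} {e : ∀ x, A.V x}
    (h : IsInt A a b e) (hab : a < b) : ∃ M ∈ L, ty M = (a, b) := by
  obtain ⟨q, p, hpq⟩ := hA
  obtain ⟨N, hN, p', q', c', hs, hc'⟩ := ks_one h (h.indec hab).1 L p q 1
    (fun x v => by rw [hpq, one_smul]) one_ne_zero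
  obtain ⟨hN1, eN, hN2⟩ := hL N hN
  obtain ⟨e1, e2⟩ := same_type h hN2 hab hN1 hs hc'
  exact ⟨N, hN, Prod.ext e1.symm e2.symm⟩

theorem ret_sublist {L1 L2 : List (ARep k n ε)} (h : L1.Sublist L2) :
    Ret (dsumList k n ε L1) (dsumList k n ε L2) := by
  induction h with
  | slnil => exact Ret.refl _
  | cons M _ ih => exact ih.trans (ret_inr M _)
  | cons_cons M _ ih => exact Ret.dsum (Ret.refl M) ih

theorem ret_mem {L : List (ARep k n ε)} {M : ARep k n ε} (h : M ∈ L) :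
    Ret M (dsumList k n ε L) :=
  (ret_inl M (dsumList k n ε [])).trans (ret_sublist (List.singleton_sublist.2 h))

theorem pairwise_not_iso {T : ARep k n ε} (hT : T.Basic) {L : List (ARep k n ε)}
    (hL : ∀ M ∈ L, M.Indec) (hiso : T.Iso (dsumList k n ε L)) :
    L.Pairwise fun A B => ¬A.Iso B := by
  rw [List.pairwise_iff_forall_sublist]
  intro A B hAB hi
  have hmem : A ∈ L := hAB.subset (by simp)
  apply hT A (hL A hmem)
  rw [isSummand_iff_ret]
  have h1 : Ret (A.dsum A) (dsumList k n ε [A, B]) :=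
    Ret.dsum (Ret.refl A) ((ret_of_iso hi).1.trans (ret_inl B _))
  exact (h1.trans (ret_sublist hAB)).trans (ret_of_iso hiso).2

end CambrianA

namespace CambrianA

variable {k : Type} [Field k] {n : ℕ} {ε : ℕ → Bool}

/-! ### Extensions via cocycles -/

/-- Cocycles describing extensions of `A` by `B`. -/
structure Coc (A B : ARep k n ε) where
  fw : ∀ i, A.V i →ₗ[k] B.V (i + 1)
  bw : ∀ i, A.V (i + 1) →ₗ[k] B.V i
  fw_zero : ∀ i, ε i = false → fw i = 0
  bw_zero : ∀ i, ε i = true → bw i = 0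

/-- The middle term of the extension attached to a cocycle. -/
def twist {A B : ARep k n ε} (φ : Coc A B) : ARep k n ε where
  V x := B.V x × A.V x
  acg _ := by infer_instance
  mod _ := by infer_instance
  fdim _ := by infer_instance
  triv x hx v := Prod.ext (B.triv x hx v.1) (A.triv x hx v.2)
  fwd i := ((B.fwd i).coprod (φ.fw i)).prod ((A.fwd i).comp (LinearMap.snd k _ _))
  bwd i := ((B.bwd i).coprod (φ.bw i)).prod ((A.bwd i).comp (LinearMap.snd k _ _))
  fwd_zero i h := by
    apply LinearMap.ext; rintro ⟨v, w⟩
    simp [φ.fw_zero i h, A.fwd_zero i h, B.fwd_zero i h]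
  bwd_zero i h := by
    apply LinearMap.ext; rintro ⟨v, w⟩
    simp [φ.bw_zero i h, A.bwd_zero i h, B.bwd_zero i h]

theorem twist_fwd {A B : ARep k n ε} (φ : Coc A B) (i : ℕ) (v : B.V i) (w : A.V i) :
    (twist φ).fwd i (v, w) = (B.fwd i v + φ.fw i w, A.fwd i w) := rfl

theorem twist_bwd {A B : ARep k n ε} (φ : Coc A B) (i : ℕ) (v : B.V (i + 1)) (w : A.V (i + 1)) :
    (twist φ).bwd i (v, w) = (B.bwd i v + φ.bw i w, A.bwd i w) := rfl

/-- The extension attached to a cocycle. -/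
def twistSES {A B : ARep k n ε} (φ : Coc A B) : SES B A where
  E := twist φ
  ι := ⟨fun x => LinearMap.inl k (B.V x) (A.V x), fun i v => by
      change ((B.fwd i v, 0) : B.V (i + 1) × A.V (i + 1)) = (twist φ).fwd i (v, 0)
      rw [twist_fwd, map_zero, map_zero, add_zero], fun i v => by
      change ((B.bwd i v, 0) : B.V i × A.V i) = (twist φ).bwd i (v, 0)
      rw [twist_bwd, map_zero, map_zero, add_zero]⟩
  π := ⟨fun x => LinearMap.snd k (B.V x) (A.V x), fun i v => rfl, fun i v => rfl⟩
  inj x := LinearMap.inl_injective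
  surj x := LinearMap.snd_surjective
  exct x v := by
    constructor
    · intro h
      exact ⟨v.1, Prod.ext rfl h.symm⟩
    · rintro ⟨u, rfl⟩
      rfl

/-- `h` trivializes the cocycle. -/
def Coc.Triv {A B : ARep k n ε} (φ : Coc A B) (h : ∀ x, A.V x →ₗ[k] B.V x) : Prop :=
  (∀ i v, φ.fw i v = B.fwd i (h i v) - h (i + 1) (A.fwd i v)) ∧
    ∀ i v, φ.bw i v = B.bwd i (h (i + 1) v) - h i (A.bwd i v)

theorem twist_splits_of {A B : ARep k n ε} (φ : Coc A B) (h : ∀ x, A.V x →ₗ[k] B.V x)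
    (hh : φ.Triv h) : (twistSES φ).Splits := by
  refine ⟨⟨fun x => (LinearMap.id : B.V x →ₗ[k] B.V x).coprod (h x), ?_, ?_⟩, ?_⟩
  · rintro i ⟨v, w⟩
    change (B.fwd i v + φ.fw i w) + h (i + 1) (A.fwd i w) = B.fwd i (v + h i w)
    rw [hh.1, map_add]; abel
  · rintro i ⟨v, w⟩
    change (B.bwd i v + φ.bw i w) + h i (A.bwd i w) = B.bwd i (v + h (i + 1) w)
    rw [hh.2, map_add]; abel
  · intro x v
    change v + h x 0 = v
    rw [map_zero, add_zero]

theorem triv_of_splits {A B : ARep k n ε} (φ : Coc A B) (hs : (twistSES φ).Splits) :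
    ∃ h, φ.Triv h := by
  obtain ⟨r, hr⟩ := hs
  have key : ∀ x (v : B.V x) (w : A.V x), r.app x (v, w) = v + r.app x (0, w) := by
    intro x v w
    have h1 : ((v, w) : B.V x × A.V x) = (v, 0) + (0, w) := by simp
    have h2 : r.app x (v, (0 : A.V x)) = v := hr x v
    calc r.app x (v, w) = r.app x (((v, 0) : B.V x × A.V x) + (0, w)) :=
          congrArg (r.app x) h1
      _ = r.app x (v, (0 : A.V x)) + r.app x ((0 : B.V x), w) := (r.app x).map_add _ _
      _ = _ := by rw [h2]
  refine ⟨fun x => (r.app x).comp (LinearMap.inr k (B.V x) (A.V x)), ?_, ?_⟩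
  · intro i v
    have := r.comm_fwd i ((0 : B.V i), v)
    change r.app (i + 1) (B.fwd i 0 + φ.fw i v, A.fwd i v) = _ at this
    rw [key, map_zero, zero_add] at this
    exact eq_sub_of_add_eq this
  · intro i v
    have := r.comm_bwd i ((0 : B.V (i + 1)), v)
    change r.app i (B.bwd i 0 + φ.bw i v, A.bwd i v) = _ at this
    rw [key, map_zero, zero_add] at this
    exact eq_sub_of_add_eq this

theorem ses_twist {A B : ARep k n ε} (τ : SES B A) :
    ∃ φ : Coc A B, ∃ ψ : (twist φ).Hom τ.E, (∀ x, Function.Bijective (ψ.app x)) ∧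
      (∀ x (v : B.V x), ψ.app x (v, (0 : A.V x)) = τ.ι.app x v) ∧
      (∀ x (v : B.V x) (w : A.V x), τ.π.app x (ψ.app x (v, w)) = w) := by
  have hs : ∀ x, ∃ s : A.V x →ₗ[k] τ.E.V x, ∀ v, τ.π.app x (s v) = v := fun x => by
    obtain ⟨s, hs⟩ := (τ.π.app x).exists_rightInverse_of_surjective
      (LinearMap.range_eq_top.2 (τ.surj x))
    exact ⟨s, fun v => LinearMap.congr_fun hs v⟩
  choose s hs using hs
  have hρ : ∀ x, ∃ ρ : τ.E.V x →ₗ[k] B.V x, ∀ v, ρ (τ.ι.app x v) = v := fun x => by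
    obtain ⟨s, hs⟩ := (τ.ι.app x).exists_leftInverse_of_injective
      (LinearMap.ker_eq_bot.2 (τ.inj x))
    exact ⟨s, fun v => LinearMap.congr_fun hs v⟩
  choose ρ hρ using hρ
  have hιρ : ∀ x v, τ.π.app x v = 0 → τ.ι.app x (ρ x v) = v := by
    intro x v hv
    obtain ⟨u, rfl⟩ := (τ.exct x v).1 hv
    rw [hρ]
  have hπι : ∀ x v, τ.π.app x (τ.ι.app x v) = 0 := fun x v => (τ.exct x _).2 ⟨v, rfl⟩
  let φ : Coc A B :=
    { fw := fun i => (ρ (i + 1)).comp ((τ.E.fwd i).comp (s i) - (s (i + 1)).comp (A.fwd i))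
      bw := fun i => (ρ i).comp ((τ.E.bwd i).comp (s (i + 1)) - (s i).comp (A.bwd i))
      fw_zero := fun i h => by
        rw [τ.E.fwd_zero i h, A.fwd_zero i h]; simp
      bw_zero := fun i h => by
        rw [τ.E.bwd_zero i h, A.bwd_zero i h]; simp }
  refine ⟨φ, ⟨fun x => (τ.ι.app x).coprod (s x), ?_, ?_⟩, ?_, ?_, ?_⟩
  · rintro i ⟨v, w⟩
    change τ.ι.app (i + 1) (B.fwd i v + ρ (i + 1) (τ.E.fwd i (s i w) - s (i + 1) (A.fwd i w))) +
      s (i + 1) (A.fwd i w) = τ.E.fwd i (τ.ι.app i v + s i w)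
    rw [map_add, hιρ, τ.ι.comm_fwd, map_add]
    · abel
    · rw [map_sub, τ.π.comm_fwd, hs, hs, sub_self]
  · rintro i ⟨v, w⟩
    change τ.ι.app i (B.bwd i v + ρ i (τ.E.bwd i (s (i + 1) w) - s i (A.bwd i w))) +
      s i (A.bwd i w) = τ.E.bwd i (τ.ι.app (i + 1) v + s (i + 1) w)
    rw [map_add, hιρ, τ.ι.comm_bwd, map_add]
    · abel
    · rw [map_sub, τ.π.comm_bwd, hs, hs, sub_self]
  · intro x
    constructor
    · apply (injective_iff_map_eq_zero _).2
      rintro ⟨v, w⟩ h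
      change τ.ι.app x v + s x w = 0 at h
      have hw : w = 0 := by
        have := congrArg (τ.π.app x) h
        rwa [map_add, hπι, hs, zero_add, map_zero] at this
      subst hw
      rw [map_zero, add_zero] at h
      have hv : v = 0 := τ.inj x (h.trans (map_zero _).symm)
      subst hv
      rfl
    · intro z
      refine ⟨(ρ x (z - s x (τ.π.app x z)), τ.π.app x z), ?_⟩
      change τ.ι.app x (ρ x (z - s x (τ.π.app x z))) + s x (τ.π.app x z) = z
      rw [hιρ]
      · abel
      · rw [map_sub, hs, sub_self]
  · intro x v
    change τ.ι.app x v + s x 0 = _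
    rw [map_zero, add_zero]
  · intro x v w
    change τ.π.app x (τ.ι.app x v + s x w) = w
    rw [map_add, hπι, hs, zero_add]

theorem splits_of_twist {A B : ARep k n ε} (τ : SES B A) (φ : Coc A B) (ψ : (twist φ).Hom τ.E)
    (hψ : ∀ x, Function.Bijective (ψ.app x))
    (h1 : ∀ x (v : B.V x), ψ.app x (v, (0 : A.V x)) = τ.ι.app x v)
    (h : (twistSES φ).Splits) : τ.Splits := by
  obtain ⟨g, hg, -⟩ := hom_inv ψ hψ
  obtain ⟨r, hr⟩ := h
  refine ⟨ARep.Hom.comp (N := twist φ) r g, fun x v => ?_⟩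
  change r.app x (g.app x (τ.ι.app x v)) = v
  rw [← h1]
  exact (congrArg (r.app x) (hg x _)).trans (hr x v)

theorem extZero_of {A B : ARep k n ε} (h : ∀ φ : Coc A B, ∃ h, φ.Triv h) : ExtZero A B := by
  intro τ
  obtain ⟨φ, ψ, h1, h2, -⟩ := ses_twist τ
  obtain ⟨t, ht⟩ := h φ
  exact splits_of_twist τ φ ψ h1 h2 (twist_splits_of φ t ht)

theorem extZero_solve {A B : ARep k n ε} {a b c d : ℕ} {eA : ∀ x, A.V x} {eB : ∀ x, B.V x}
    (hA : IsInt A a b eA) (hB : IsInt B c d eB)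
    (hsol : ∀ p q : ℕ → k, ∃ t : ℕ → k,
      (∀ i, ε i = true → a < i → i ≤ b → c < i + 1 → i + 1 ≤ d →
        p i = (if c < i then t i else 0) - (if i + 1 ≤ b then t (i + 1) else 0)) ∧
      (∀ i, ε i = false → a < i + 1 → i + 1 ≤ b → c < i → i ≤ d →
        q i = (if i + 1 ≤ d then t (i + 1) else 0) - (if a < i then t i else 0))) :
    ExtZero A B := by
  apply extZero_of
  intro φ
  have hp : ∀ i, ∃ p, φ.fw i (eA i) = p • eB (i + 1) := fun i => hB.span _ _
  have hq : ∀ i, ∃ p, φ.bw i (eA (i + 1)) = p • eB i := fun i => hB.span _ _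
  choose p hp using hp
  choose q hq using hq
  obtain ⟨t, ht1, ht2⟩ := hsol p q
  obtain ⟨cA, hc1, hc2⟩ := hA.exists_coord
  have hh : ∀ x, a < x → x ≤ b → ((cA x).smulRight (t x • eB x)) (eA x) = t x • eB x := by
    intro x h1 h2
    rw [LinearMap.smulRight_apply, hc2 x h1 h2, one_smul]
  refine ⟨fun x => (cA x).smulRight (t x • eB x), ?_, ?_⟩
  · intro i v
    beta_reduce
    cases hε : ε i with
    | false => rw [φ.fw_zero i hε, A.fwd_zero i hε, B.fwd_zero i hε]; simp
    | true =>
      rw [hc1 i v]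
      simp only [map_smul]
      rw [← smul_sub]
      congr 1
      by_cases hx : a < i ∧ i ≤ b
      · rw [hh i hx.1 hx.2, hA.fwd i hε hx.1, hp]
        by_cases hy : c < i + 1 ∧ i + 1 ≤ d
        · rw [ht1 i hε hx.1 hx.2 hy.1 hy.2, map_smul, sub_smul]
          congr 1
          · split_ifs with hc
            · rw [hB.fwd i hε hc]
            · rw [hB.zero (x := i) (by omega)]; simp
          · split_ifs with hc
            · rw [hh (i + 1) (by omega) hc]
            · rw [hA.zero (x := i + 1) (by omega)]; simp
        · exact (hB.vzero hy _).trans (hB.vzero hy _).symm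
      · rw [hA.zero hx]; simp
  · intro i v
    beta_reduce
    cases hε : ε i with
    | true => rw [φ.bw_zero i hε, A.bwd_zero i hε, B.bwd_zero i hε]; simp
    | false =>
      rw [hc1 (i + 1) v]
      simp only [map_smul]
      rw [← smul_sub]
      congr 1
      by_cases hx : a < i + 1 ∧ i + 1 ≤ b
      · rw [hh (i + 1) hx.1 hx.2, hA.bwd i hε (by omega), hq]
        by_cases hy : c < i ∧ i ≤ d
        · rw [ht2 i hε hx.1 hx.2 hy.1 hy.2, map_smul, sub_smul]
          congr 1
          · split_ifs with hc
            · rw [hB.bwd i hε (by omega)]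
            · rw [hB.zero (x := i + 1) (by omega)]; simp
          · split_ifs with hc
            · rw [hh i hc (by omega)]
            · rw [hA.zero (x := i) (by omega)]; simp
        · exact (hB.vzero hy _).trans (hB.vzero hy _).symm
      · rw [hA.zero hx]; simp

/-- Upward recursion. -/
theorem extZero_right {A B : ARep k n ε} {a b c d : ℕ} {eA : ∀ x, A.V x} {eB : ∀ x, B.V x}
    (hA : IsInt A a b eA) (hB : IsInt B c d eB)
    (h1 : ∀ i, ε i = true → a < i → i ≤ b → c < i + 1 → i + 1 ≤ d → i + 1 ≤ b)
    (h2 : ∀ i, ε i = false → a < i + 1 → i + 1 ≤ b → c < i → i ≤ d → i + 1 ≤ d) :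
    ExtZero A B := by
  apply extZero_solve hA hB
  intro p q
  let t : ℕ → k := fun x => Nat.rec (motive := fun _ => k) 0 (fun i ti =>
    if ε i = true then (if c < i then ti else 0) - p i else q i + (if a < i then ti else 0)) x
  have ht : ∀ i, t (i + 1) = if ε i = true then (if c < i then t i else 0) - p i else
    q i + (if a < i then t i else 0) := fun i => rfl
  refine ⟨t, ?_, ?_⟩
  · intro i hε ha hb hc hd
    rw [if_pos (h1 i hε ha hb hc hd), ht, if_pos hε]
    abel
  · intro i hε ha hb hc hd
    rw [if_pos (h2 i hε ha hb hc hd), ht, if_neg (by simp [hε])]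
    abel

/-- Downward recursion. -/
theorem extZero_left {A B : ARep k n ε} {a b c d : ℕ} {eA : ∀ x, A.V x} {eB : ∀ x, B.V x}
    (hA : IsInt A a b eA) (hB : IsInt B c d eB)
    (h1 : ∀ i, ε i = true → a < i → i ≤ b → c < i + 1 → i + 1 ≤ d → c < i)
    (h2 : ∀ i, ε i = false → a < i + 1 → i + 1 ≤ b → c < i → i ≤ d → a < i) :
    ExtZero A B := by
  apply extZero_solve hA hB
  intro p q
  let s : ℕ → k := fun x => Nat.rec (motive := fun _ => k) 0 (fun j tj =>
    let i := b + d - (j + 1)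
    if ε i = true then p i + (if i + 1 ≤ b then tj else 0) else
      (if i + 1 ≤ d then tj else 0) - q i) x
  have hs : ∀ j, s (j + 1) = if ε (b + d - (j + 1)) = true then
    p (b + d - (j + 1)) + (if b + d - (j + 1) + 1 ≤ b then s j else 0) else
      (if b + d - (j + 1) + 1 ≤ d then s j else 0) - q (b + d - (j + 1)) := fun i => rfl
  have ht : ∀ i, i < b + d → s (b + d - i) = if ε i = true then
    p i + (if i + 1 ≤ b then s (b + d - (i + 1)) else 0) else
      (if i + 1 ≤ d then s (b + d - (i + 1)) else 0) - q i := by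
    intro i hi
    have e1 : b + d - i = (b + d - (i + 1)) + 1 := by omega
    have e2 : b + d - ((b + d - (i + 1)) + 1) = i := by omega
    rw [e1, hs, e2]
  refine ⟨fun x => s (b + d - x), ?_, ?_⟩
  · intro i hε ha hb hc hd
    rw [if_pos (h1 i hε ha hb hc hd)]
    beta_reduce
    rw [ht i (by omega), if_pos hε]
    abel
  · intro i hε ha hb hc hd
    rw [if_pos (h2 i hε ha hb hc hd)]
    beta_reduce
    rw [ht i (by omega), if_neg (show ¬ (ε i = true) by simp [hε])]
    abel

end CambrianA

namespace CambrianA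

variable {k : Type} [Field k] {n : ℕ} {ε : ℕ → Bool}

/-! ### Extensions between interval representations -/

/-- The combinatorial condition for a decomposable nontrivial extension of `M(e)` by `M(f)`. -/
def Bad (ε : ℕ → Bool) (e f : ℕ × ℕ) : Prop :=
  max e.1 f.1 < min e.2 f.2 ∧
    ((e.1 < f.1 ∧ ε f.1 = true) ∨ (f.1 < e.1 ∧ ε e.1 = false)) ∧
    ((f.2 < e.2 ∧ ε f.2 = false) ∨ (e.2 < f.2 ∧ ε e.2 = true))

/-- The elementary cocycle at the edge `j`. -/
def oneCoc {A B : ARep k n ε} (cA : ∀ x, A.V x →ₗ[k] k) (eB : ∀ x, B.V x) (j : ℕ) :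
    Coc A B where
  fw i := if i = j ∧ ε i = true then (cA i).smulRight (eB (i + 1)) else 0
  bw i := if i = j ∧ ε i = false then (cA (i + 1)).smulRight (eB i) else 0
  fw_zero i h := by simp [h]
  bw_zero i h := by simp [h]

theorem oneCoc_fw_self {A B : ARep k n ε} (cA : ∀ x, A.V x →ₗ[k] k) (eB : ∀ x, B.V x) (j : ℕ)
    (h : ε j = true) (v : A.V j) : (oneCoc cA eB j).fw j v = cA j v • eB (j + 1) := by
  simp [oneCoc, h]

theorem oneCoc_bw_self {A B : ARep k n ε} (cA : ∀ x, A.V x →ₗ[k] k) (eB : ∀ x, B.V x) (j : ℕ)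
    (h : ε j = false) (v : A.V (j + 1)) : (oneCoc cA eB j).bw j v = cA (j + 1) v • eB j := by
  simp [oneCoc, h]

theorem oneCoc_fw_of_ne {A B : ARep k n ε} (cA : ∀ x, A.V x →ₗ[k] k) (eB : ∀ x, B.V x) (j : ℕ)
    {i : ℕ} (h : i ≠ j) (v : A.V i) : (oneCoc cA eB j).fw i v = 0 := by
  simp [oneCoc, h]

theorem oneCoc_bw_of_ne {A B : ARep k n ε} (cA : ∀ x, A.V x →ₗ[k] k) (eB : ∀ x, B.V x) (j : ℕ)
    {i : ℕ} (h : i ≠ j) (v : A.V (i + 1)) : (oneCoc cA eB j).bw i v = 0 := by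
  simp [oneCoc, h]

theorem bad_not_extZero {A B : ARep k n ε} {a b c d : ℕ} {eA : ∀ x, A.V x} {eB : ∀ x, B.V x}
    (hA : IsInt A a b eA) (hB : IsInt B c d eB) (hbad : Bad ε (a, b) (c, d)) :
    ¬ExtZero A B := by
  intro hext
  obtain ⟨hcap, hl, hr⟩ := hbad
  simp only at hcap hl hr
  obtain ⟨cA, hc1, hc2⟩ := hA.exists_coord
  set m := min b d with hm
  obtain ⟨h, h1, h2⟩ := triv_of_splits _ (hext (twistSES (oneCoc cA eB m)))
  have ht : ∀ x, ∃ t : k, h x (eA x) = t • eB x := fun x => hB.span _ _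
  choose t ht using ht
  have cancel : ∀ x (s : k), c < x → x ≤ d → s • eB x = 0 → s = 0 := by
    intro x s h1 h2 h3
    exact (smul_eq_zero.1 h3).resolve_right ((hB.supp x).2 ⟨h1, h2⟩)
  -- all coordinates vanish
  have hzero : ∀ j, max a c + 1 + j ≤ m → t (max a c + 1 + j) = 0 := by
    intro j
    induction j with
    | zero =>
      intro hj
      rw [add_zero] at hj ⊢
      refine cancel (max a c + 1) _ (by omega) (by omega) ?_
      rw [← ht]
      rcases hl with ⟨hac, hε⟩ | ⟨hca, hε⟩
      · have e : max a c = c := by omega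
        rw [e] at hj ⊢
        have := h1 c (eA c)
        rw [oneCoc_fw_of_ne _ _ _ (by omega), hB.vzero (x := c) (by omega) (h c (eA c)), map_zero,
          zero_sub, hA.fwd c hε hac] at this
        exact (neg_eq_zero.1 this.symm)
      · have e : max a c = a := by omega
        rw [e] at hj ⊢
        have := h2 a (eA (a + 1))
        rw [oneCoc_bw_of_ne _ _ _ (by omega), hA.vzero (x := a) (by omega) (A.bwd a (eA (a + 1))),
          map_zero, sub_zero, ht, map_smul, hB.bwd a hε (by omega)] at this
        have h3 := cancel _ _ hca (by omega) this.symm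
        rw [ht, h3, zero_smul]
    | succ j ih =>
      intro hj
      have ih := ih (by omega)
      rw [← add_assoc]
      set x := max a c + 1 + j with hx
      refine cancel (x + 1) _ (by omega) (by omega) ?_
      cases hε : ε x with
      | true =>
        have := h1 x (eA x)
        rw [oneCoc_fw_of_ne _ _ _ (by omega), ht, ih, zero_smul, map_zero, zero_sub,
          hA.fwd x hε (by omega), ht] at this
        exact (neg_eq_zero.1 this.symm)
      | false =>
        have := h2 x (eA (x + 1))
        rw [oneCoc_bw_of_ne _ _ _ (by omega), hA.bwd x hε (by omega), ht x, ih, zero_smul, sub_zero,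
          ht, map_smul, hB.bwd x hε (by omega)] at this
        rw [cancel _ _ (by omega) (by omega) this.symm, zero_smul]
  have hm0 : t m = 0 := by
    have := hzero (m - (max a c + 1)) (by omega)
    rwa [show max a c + 1 + (m - (max a c + 1)) = m by omega] at this
  rcases hr with ⟨hdb, hε⟩ | ⟨hbd, hε⟩
  · have e : m = d := by omega
    have := h2 d (eA (d + 1))
    rw [e] at this hm0
    rw [oneCoc_bw_self _ _ _ hε, hc2 _ (by omega) (by omega), hA.bwd d hε (by omega), ht d, hm0,
      hB.vzero (x := d + 1) (by omega) (h (d + 1) (eA (d + 1)))] at this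
    simp only [map_zero, zero_smul, sub_zero] at this
    exact one_ne_zero (cancel _ _ (by omega) le_rfl this)
  · have e : m = b := by omega
    have := h1 b (eA b)
    rw [e] at this hm0
    rw [oneCoc_fw_self _ _ _ hε, hc2 _ (by omega) (by omega), hA.fwd b hε (by omega), ht b, hm0,
      hA.zero (x := b + 1) (by omega)] at this
    simp only [map_zero, zero_smul, sub_zero] at this
    exact one_ne_zero (cancel _ _ (by omega) (by omega) this)

theorem bad_not_extOne {A B : ARep k n ε} {a b c d : ℕ} {eA : ∀ x, A.V x} {eB : ∀ x, B.V x}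
    (hA : IsInt A a b eA) (hB : IsInt B c d eB) (hbad : Bad ε (a, b) (c, d)) :
    ¬ExtOneDimIndecMid A B := by
  rintro ⟨σ, -, hE, -⟩
  obtain ⟨hcap, -, -⟩ := hbad
  simp only at hcap
  obtain ⟨p, q, e, hpq, -, hI⟩ := Indec.isInt hE
  set x := min b d with hx
  have hAx : eA x ≠ 0 := (hA.supp x).2 ⟨by omega, by omega⟩
  have hBx : eB x ≠ 0 := (hB.supp x).2 ⟨by omega, by omega⟩
  obtain ⟨s, hs⟩ := hI.span x (σ.ι.app x (eB x))
  obtain ⟨w, hw⟩ := σ.surj x (eA x)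
  obtain ⟨r, hr⟩ := hI.span x w
  have h0 : σ.π.app x (σ.ι.app x (eB x)) = 0 := (σ.exct x _).2 ⟨_, rfl⟩
  have hs0 : s ≠ 0 := by
    rintro rfl
    rw [zero_smul] at hs
    exact hBx (σ.inj x (hs.trans (map_zero _).symm))
  rw [hs, map_smul] at h0
  have h1 := (smul_eq_zero.1 h0).resolve_left hs0
  rw [hr, map_smul, h1, smul_zero] at hw
  exact hAx hw.symm

/-- One active edge. -/
theorem extOne_of {A B : ARep k n ε} {a b c d : ℕ} {eA : ∀ x, A.V x} {eB : ∀ x, B.V x}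
    (hA : IsInt A a b eA) (hB : IsInt B c d eB) (cA : ∀ x, A.V x →ₗ[k] k)
    (hc1 : ∀ x v, v = cA x v • eA x) (j : ℕ)
    (hf : ∀ i, ε i = true → a < i → i ≤ b → c < i + 1 → i + 1 ≤ d → i = j)
    (hb : ∀ i, ε i = false → a < i + 1 → i + 1 ≤ b → c < i → i ≤ d → i = j)
    (hns : ¬(twistSES (oneCoc cA eB j)).Splits) (hind : (twist (oneCoc cA eB j)).Indec) :
    ExtOneDimIndecMid A B := by
  refine ⟨twistSES (oneCoc cA eB j), hns, hind, ?_⟩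
  intro τ hτ
  obtain ⟨φ, ψ, hψ, h1, h2⟩ := ses_twist τ
  have key : ∃ s : k, (∀ i v, φ.fw i v = s • (oneCoc cA eB j).fw i v) ∧
      ∀ i v, φ.bw i v = s • (oneCoc cA eB j).bw i v := by
    cases hε : ε j with
    | true =>
      obtain ⟨s, hs⟩ := hB.span _ (φ.fw j (eA j))
      refine ⟨s, ?_, ?_⟩
      · intro i v
        cases hεi : ε i with
        | false => rw [φ.fw_zero i hεi, (oneCoc cA eB j).fw_zero i hεi]; simp
        | true =>
          by_cases hij : i = j
          · subst hij
            rw [oneCoc_fw_self _ _ _ hε, smul_comm, ← hs, ← map_smul, ← hc1]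
          · rw [oneCoc_fw_of_ne _ _ _ hij, smul_zero]
            by_cases hx : a < i ∧ i ≤ b
            · exact hB.vzero (fun hy => hij (hf i hεi hx.1 hx.2 hy.1 hy.2)) _
            · rw [hA.vzero hx v, map_zero]
      · intro i v
        cases hεi : ε i with
        | true => rw [φ.bw_zero i hεi, (oneCoc cA eB j).bw_zero i hεi]; simp
        | false =>
          have hij : i ≠ j := by rintro rfl; simp [hε] at hεi
          rw [oneCoc_bw_of_ne _ _ _ hij, smul_zero]
          by_cases hx : a < i + 1 ∧ i + 1 ≤ b
          · exact hB.vzero (fun hy => hij (hb i hεi hx.1 hx.2 hy.1 hy.2)) _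
          · rw [hA.vzero hx v, map_zero]
    | false =>
      obtain ⟨s, hs⟩ := hB.span _ (φ.bw j (eA (j + 1)))
      refine ⟨s, ?_, ?_⟩
      · intro i v
        cases hεi : ε i with
        | false => rw [φ.fw_zero i hεi, (oneCoc cA eB j).fw_zero i hεi]; simp
        | true =>
          have hij : i ≠ j := by rintro rfl; simp [hε] at hεi
          rw [oneCoc_fw_of_ne _ _ _ hij, smul_zero]
          by_cases hx : a < i ∧ i ≤ b
          · exact hB.vzero (fun hy => hij (hf i hεi hx.1 hx.2 hy.1 hy.2)) _
          · rw [hA.vzero hx v, map_zero]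
      · intro i v
        cases hεi : ε i with
        | true => rw [φ.bw_zero i hεi, (oneCoc cA eB j).bw_zero i hεi]; simp
        | false =>
          by_cases hij : i = j
          · subst hij
            rw [oneCoc_bw_self _ _ _ hε, smul_comm, ← hs, ← map_smul, ← hc1]
          · rw [oneCoc_bw_of_ne _ _ _ hij, smul_zero]
            by_cases hx : a < i + 1 ∧ i + 1 ≤ b
            · exact hB.vzero (fun hy => hij (hb i hεi hx.1 hx.2 hy.1 hy.2)) _
            · rw [hA.vzero hx v, map_zero]
  obtain ⟨s, hs1, hs2⟩ := key
  have hs0 : s ≠ 0 := by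
    rintro rfl
    apply hτ
    refine splits_of_twist τ φ ψ hψ h1 (twist_splits_of φ (fun _ => 0) ⟨?_, ?_⟩)
    · intro i v; rw [hs1]; simp
    · intro i v; rw [hs2]; simp
  let θ : (twist (oneCoc cA eB j)).Hom (twist φ) :=
    { app := fun x => (LinearMap.id : B.V x →ₗ[k] B.V x).prodMap
        (s⁻¹ • (LinearMap.id : A.V x →ₗ[k] A.V x))
      comm_fwd := by
        rintro i ⟨v, w⟩
        change ((B.fwd i v + (oneCoc cA eB j).fw i w, s⁻¹ • A.fwd i w) :
          B.V (i + 1) × A.V (i + 1)) = (B.fwd i v + φ.fw i (s⁻¹ • w), A.fwd i (s⁻¹ • w))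
        rw [hs1, map_smul, map_smul, smul_smul, mul_inv_cancel₀ hs0, one_smul]
      comm_bwd := by
        rintro i ⟨v, w⟩
        change ((B.bwd i v + (oneCoc cA eB j).bw i w, s⁻¹ • A.bwd i w) :
          B.V i × A.V i) = (B.bwd i v + φ.bw i (s⁻¹ • w), A.bwd i (s⁻¹ • w))
        rw [hs2, map_smul, map_smul, smul_smul, mul_inv_cancel₀ hs0, one_smul] }
  refine ⟨s⁻¹, inv_ne_zero hs0, ψ.comp θ, ?_, ?_, ?_⟩
  · intro x
    change Function.Bijective (ψ.app x ∘ θ.app x)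
    refine (hψ x).comp ⟨?_, ?_⟩
    · rintro ⟨v, w⟩ ⟨v', w'⟩ h
      have e1 : v = v' := congrArg Prod.fst h
      have e2 : s⁻¹ • w = s⁻¹ • w' := congrArg Prod.snd h
      rw [e1, smul_right_injective _ (inv_ne_zero hs0) e2]
    · rintro ⟨v, w⟩
      refine ⟨(v, s • w), Prod.ext rfl ?_⟩
      change s⁻¹ • s • w = w
      rw [smul_smul, inv_mul_cancel₀ hs0, one_smul]
  · intro x v
    rw [← h1]
    change ψ.app x (v, s⁻¹ • (0 : A.V x)) = _
    rw [smul_zero]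
  · rintro x ⟨v, w⟩
    exact h2 x v (s⁻¹ • w)

theorem extOne_fwd {A B : ARep k n ε} {a b c d : ℕ} {eA : ∀ x, A.V x} {eB : ∀ x, B.V x}
    (hA : IsInt A a b eA) (hB : IsInt B c d eB) (hab : a < b) (hcd : c < d)
    (hbc : b = c) (hε : ε b = true) : ExtOneDimIndecMid A B := by
  subst hbc
  obtain ⟨cA, hc1, hc2⟩ := hA.exists_coord
  refine extOne_of hA hB cA hc1 b (by intros; omega) (by intros; omega) ?_ ?_
  · intro hs
    obtain ⟨h, h1, h2⟩ := triv_of_splits _ hs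
    have := h1 b (eA b)
    rw [oneCoc_fw_self _ _ _ hε, hc2 _ (by omega) (by omega), hA.fwd b hε (by omega),
      hB.vzero (x := b) (by omega) (h b (eA b)), hA.zero (x := b + 1) (by omega)] at this
    simp only [map_zero, sub_zero, one_smul] at this
    exact (hB.supp (b + 1)).2 ⟨by omega, by omega⟩ this
  · have hI : IsInt (twist (oneCoc cA eB b)) a d (fun x => (eB x, eA x)) := by
      constructor
      · rintro x ⟨v, w⟩
        by_cases hx : x ≤ b
        · obtain ⟨s, hs⟩ := hA.span x w
          refine ⟨s, Prod.ext ?_ hs⟩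
          exact (hB.vzero (by omega) v).trans (hB.vzero (by omega) _).symm
        · obtain ⟨s, hs⟩ := hB.span x v
          refine ⟨s, Prod.ext hs ?_⟩
          exact (hA.vzero (by omega) w).trans (hA.vzero (by omega) _).symm
      · intro x
        have e : ((eB x, eA x) : B.V x × A.V x) ≠ 0 ↔ (eB x ≠ 0 ∨ eA x ≠ 0) := by
          rw [Ne, Prod.mk_eq_zero]; tauto
        refine e.trans ?_
        rw [hA.supp, hB.supp]; omega
      · intro i hi hai
        rw [twist_fwd]
        refine Prod.ext ?_ (hA.fwd i hi hai)
        change B.fwd i (eB i) + (oneCoc cA eB b).fw i (eA i) = eB (i + 1)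
        rcases lt_trichotomy i b with h | h | h
        · rw [oneCoc_fw_of_ne _ _ _ (by omega), hB.zero (x := i) (by omega),
            hB.zero (x := i + 1) (by omega), map_zero, zero_add]
        · subst h
          rw [oneCoc_fw_self _ _ _ hi, hB.zero (x := i) (by omega), hc2 _ hai le_rfl, map_zero,
            zero_add, one_smul]
        · rw [oneCoc_fw_of_ne _ _ _ (by omega), add_zero, hB.fwd i hi h]
      · intro i hi hid
        have hib : i ≠ b := by rintro rfl; simp [hε] at hi
        rw [twist_bwd]
        refine Prod.ext ?_ ?_
        · change B.bwd i (eB (i + 1)) + (oneCoc cA eB b).bw i (eA (i + 1)) = eB i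
          rw [oneCoc_bw_of_ne _ _ _ hib, hB.bwd i hi hid, add_zero]
        · change A.bwd i (eA (i + 1)) = eA i
          by_cases h : i < b
          · exact hA.bwd i hi h
          · rw [hA.zero (x := i) (by omega), hA.zero (x := i + 1) (by omega), map_zero]
    exact hI.indec (by omega)

theorem extOne_bwd {A B : ARep k n ε} {a b c d : ℕ} {eA : ∀ x, A.V x} {eB : ∀ x, B.V x}
    (hA : IsInt A a b eA) (hB : IsInt B c d eB) (hab : a < b) (hcd : c < d)
    (hda : d = a) (hε : ε d = false) : ExtOneDimIndecMid A B := by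
  subst hda
  obtain ⟨cA, hc1, hc2⟩ := hA.exists_coord
  refine extOne_of hA hB cA hc1 d (by intros; omega) (by intros; omega) ?_ ?_
  · intro hs
    obtain ⟨h, h1, h2⟩ := triv_of_splits _ hs
    have := h2 d (eA (d + 1))
    rw [oneCoc_bw_self _ _ _ hε, hc2 _ (by omega) (by omega), hA.bwd d hε (by omega),
      hB.vzero (x := d + 1) (by omega) (h (d + 1) (eA (d + 1))),
      hA.zero (x := d) (by omega)] at this
    simp only [map_zero, sub_zero, one_smul] at this
    exact (hB.supp d).2 ⟨by omega, by omega⟩ this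
  · have hI : IsInt (twist (oneCoc cA eB d)) c b (fun x => (eB x, eA x)) := by
      constructor
      · rintro x ⟨v, w⟩
        by_cases hx : d < x
        · obtain ⟨s, hs⟩ := hA.span x w
          refine ⟨s, Prod.ext ?_ hs⟩
          exact (hB.vzero (by omega) v).trans (hB.vzero (by omega) _).symm
        · obtain ⟨s, hs⟩ := hB.span x v
          refine ⟨s, Prod.ext hs ?_⟩
          exact (hA.vzero (by omega) w).trans (hA.vzero (by omega) _).symm
      · intro x
        have e : ((eB x, eA x) : B.V x × A.V x) ≠ 0 ↔ (eB x ≠ 0 ∨ eA x ≠ 0) := by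
          rw [Ne, Prod.mk_eq_zero]; tauto
        refine e.trans ?_
        rw [hA.supp, hB.supp]; omega
      · intro i hi hci
        have hib : i ≠ d := by rintro rfl; simp [hε] at hi
        rw [twist_fwd]
        refine Prod.ext ?_ ?_
        · change B.fwd i (eB i) + (oneCoc cA eB d).fw i (eA i) = eB (i + 1)
          rw [oneCoc_fw_of_ne _ _ _ hib, hB.fwd i hi hci, add_zero]
        · change A.fwd i (eA i) = eA (i + 1)
          by_cases h : d < i
          · exact hA.fwd i hi h
          · rw [hA.zero (x := i) (by omega), hA.zero (x := i + 1) (by omega), map_zero]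
      · intro i hi hib
        rw [twist_bwd]
        refine Prod.ext ?_ (hA.bwd i hi hib)
        change B.bwd i (eB (i + 1)) + (oneCoc cA eB d).bw i (eA (i + 1)) = eB i
        rcases lt_trichotomy i d with h | h | h
        · rw [oneCoc_bw_of_ne _ _ _ (by omega), add_zero, hB.bwd i hi h]
        · subst h
          rw [oneCoc_bw_self _ _ _ hi, hB.zero (x := i + 1) (by omega),
            hc2 _ (by omega) (by omega), map_zero, zero_add, one_smul]
        · rw [oneCoc_bw_of_ne _ _ _ (by omega), hB.zero (x := i) (by omega),
            hB.zero (x := i + 1) (by omega), map_zero, zero_add]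
    exact hI.indec (by omega)

theorem ext_of_not_bad {A B : ARep k n ε} {a b c d : ℕ} {eA : ∀ x, A.V x} {eB : ∀ x, B.V x}
    (hA : IsInt A a b eA) (hB : IsInt B c d eB) (hab : a < b) (hcd : c < d)
    (hbad : ¬Bad ε (a, b) (c, d)) : ExtZero A B ∨ ExtOneDimIndecMid A B := by
  by_cases hR : (b < d ∧ ε b = true ∧ c ≤ b) ∨ (d < b ∧ ε d = false ∧ a ≤ d)
  swap
  · left
    push Not at hR
    refine extZero_right hA hB ?_ ?_
    · intro i hε h1 h2 h3 h4
      by_contra hcon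
      have : i = b := by omega
      subst this
      have := hR.1 (by omega) hε
      omega
    · intro i hε h1 h2 h3 h4
      by_contra hcon
      have : i = d := by omega
      subst this
      have := hR.2 (by omega) hε
      omega
  by_cases hL : (a < c ∧ ε c = true ∧ c ≤ b) ∨ (c < a ∧ ε a = false ∧ a ≤ d)
  swap
  · left
    push Not at hL
    refine extZero_left hA hB ?_ ?_
    · intro i hε h1 h2 h3 h4
      by_contra hcon
      have : i = c := by omega
      subst this
      have := hL.1 (by omega) hε
      omega
    · intro i hε h1 h2 h3 h4
      by_contra hcon
      have : i = a := by omega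
      subst this
      have := hL.2 (by omega) hε
      omega
  have hdis : ¬ max a c < min b d := fun hcap => hbad ⟨hcap, by tauto, by tauto⟩
  right
  rcases hR with ⟨h1, h2, h3⟩ | ⟨h1, h2, h3⟩
  · exact extOne_fwd hA hB hab hcd (by omega) h2
  · exact extOne_bwd hA hB hab hcd (by omega) h2

end CambrianA

namespace CambrianA

/-! ### Counting chords in a triangulation -/

theorem count_chords (V : Finset ℕ) (S : Finset (ℕ × ℕ))
    (hS : ∀ e ∈ S, e.1 ∈ V ∧ e.2 ∈ V ∧ e.1 < e.2)
    (nc : ∀ e ∈ S, ∀ f ∈ S, ¬(e.1 < f.1 ∧ f.1 < e.2 ∧ e.2 < f.2))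
    (hmax : ∀ p ∈ V, ∀ q ∈ V, p < q →
      (∀ f ∈ S, ¬(p < f.1 ∧ f.1 < q ∧ q < f.2) ∧ ¬(f.1 < p ∧ p < f.2 ∧ f.2 < q)) → (p, q) ∈ S)
    (m : ℕ) : ∀ p q, (p, q) ∈ S → (V.filter fun v => p ≤ v ∧ v ≤ q).card = m + 2 →
      (S.filter fun f => p ≤ f.1 ∧ f.2 ≤ q).card = 2 * m + 1 := by
  induction m using Nat.strong_induction_on with
  | _ m ih =>
  intro p q hpq hcard
  obtain ⟨hp, hq, hlt⟩ := hS _ hpq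
  simp only at hp hq hlt
  by_cases hex : ∃ v ∈ V, p < v ∧ v < q
  · -- the successor of `p`
    have hne : (V.filter fun v => p < v ∧ v < q).Nonempty := by
      obtain ⟨v, h1, h2⟩ := hex
      exact ⟨v, Finset.mem_filter.2 ⟨h1, h2⟩⟩
    obtain ⟨v0, hv0, hv0min⟩ := Finset.exists_min_image _ id hne
    rw [Finset.mem_filter] at hv0
    have hv0S : (p, v0) ∈ S := by
      refine hmax p hp v0 hv0.1 hv0.2.1 ?_
      intro f hf
      obtain ⟨g1, g2, g3⟩ := hS f hf
      constructor
      · intro h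
        have := hv0min f.1 (Finset.mem_filter.2 ⟨g1, by omega, by omega⟩)
        simp only [id] at this
        omega
      · intro h
        have := hv0min f.2 (Finset.mem_filter.2 ⟨g2, by omega, by omega⟩)
        simp only [id] at this
        omega
    have hne' : (V.filter fun v => p < v ∧ v < q ∧ (p, v) ∈ S).Nonempty :=
      ⟨v0, Finset.mem_filter.2 ⟨hv0.1, hv0.2.1, hv0.2.2, hv0S⟩⟩
    obtain ⟨r, hr, hrmax⟩ := Finset.exists_max_image _ id hne'
    rw [Finset.mem_filter] at hr
    obtain ⟨hrV, hpr, hrq, hprS⟩ := hr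
    have hrmax' : ∀ f ∈ S, f.1 = p → f.2 < q → f.2 ≤ r := by
      intro f hf h1 h2
      obtain ⟨g1, g2, g3⟩ := hS f hf
      subst h1
      exact hrmax f.2 (Finset.mem_filter.2 ⟨g2, g3, h2, hf⟩)
    have hrqS : (r, q) ∈ S := by
      refine hmax r hrV q hq hrq ?_
      intro f hf
      obtain ⟨g1, g2, g3⟩ := hS f hf
      have c1 := nc _ hpq f hf
      have c2 := nc f hf _ hpq
      have c3 := nc _ hprS f hf
      have c4 := hrmax' f hf
      simp only at c1 c2 c3
      constructor
      · omega
      · intro h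
        by_cases h5 : f.1 = p
        · have := c4 h5 (by omega)
          omega
        · omega
    have hset : (S.filter fun f => p ≤ f.1 ∧ f.2 ≤ q) =
        insert (p, q) ((S.filter fun f => p ≤ f.1 ∧ f.2 ≤ r) ∪
          (S.filter fun f => r ≤ f.1 ∧ f.2 ≤ q)) := by
      ext f
      simp only [Finset.mem_filter, Finset.mem_insert, Finset.mem_union]
      constructor
      · rintro ⟨hf, h1, h2⟩
        obtain ⟨g1, g2, g3⟩ := hS f hf
        have c3 := nc _ hprS f hf
        have c4 := hrmax' f hf
        simp only at c3
        by_cases h5 : f.1 = p ∧ f.2 = q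
        · left; exact Prod.ext h5.1 h5.2
        · right
          by_cases h6 : f.2 ≤ r
          · exact Or.inl ⟨hf, h1, h6⟩
          · right
            refine ⟨hf, ?_, h2⟩
            by_contra h7
            by_cases h8 : f.1 = p
            · have := c4 h8 (by omega)
              omega
            · omega
      · rintro (rfl | ⟨hf, h1, h2⟩ | ⟨hf, h1, h2⟩)
        · exact ⟨hpq, le_rfl, le_rfl⟩
        · exact ⟨hf, h1, by omega⟩
        · exact ⟨hf, by omega, h2⟩
    have hVset : (V.filter fun v => p ≤ v ∧ v ≤ q) =
        (V.filter fun v => p ≤ v ∧ v ≤ r) ∪ (V.filter fun v => r ≤ v ∧ v ≤ q) := by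
      ext v
      simp only [Finset.mem_filter, Finset.mem_union]
      constructor
      · rintro ⟨h, h1, h2⟩
        by_cases h3 : v ≤ r
        · exact Or.inl ⟨h, h1, h3⟩
        · exact Or.inr ⟨h, by omega, h2⟩
      · rintro (⟨h, h1, h2⟩ | ⟨h, h1, h2⟩)
        · exact ⟨h, h1, by omega⟩
        · exact ⟨h, by omega, h2⟩
    have hVint : (V.filter fun v => p ≤ v ∧ v ≤ r) ∩ (V.filter fun v => r ≤ v ∧ v ≤ q) = {r} := by
      ext v
      simp only [Finset.mem_filter, Finset.mem_inter, Finset.mem_singleton]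
      constructor
      · rintro ⟨⟨-, h1, h2⟩, -, h3, h4⟩
        omega
      · rintro rfl
        exact ⟨⟨hrV, by omega, le_rfl⟩, hrV, le_rfl, by omega⟩
    have hc := Finset.card_union_add_card_inter (V.filter fun v => p ≤ v ∧ v ≤ r)
      (V.filter fun v => r ≤ v ∧ v ≤ q)
    rw [← hVset, hVint, hcard, Finset.card_singleton] at hc
    have two : ∀ x y, x ∈ V → y ∈ V → x < y →
        2 ≤ (V.filter fun v => x ≤ v ∧ v ≤ y).card := by
      intro x y hx hy hxy
      have : ({x, y} : Finset ℕ) ⊆ V.filter fun v => x ≤ v ∧ v ≤ y := by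
        intro z hz
        simp only [Finset.mem_insert, Finset.mem_singleton] at hz
        rw [Finset.mem_filter]
        rcases hz with rfl | rfl
        · exact ⟨hx, le_rfl, by omega⟩
        · exact ⟨hy, by omega, le_rfl⟩
      have h2 := Finset.card_le_card this
      rwa [Finset.card_pair (by omega)] at h2
    have t1 := two p r hp hrV hpr
    have t2 := two r q hrV hq hrq
    have i1 := ih ((V.filter fun v => p ≤ v ∧ v ≤ r).card - 2) (by omega) p r hprS (by omega)
    have i2 := ih ((V.filter fun v => r ≤ v ∧ v ≤ q).card - 2) (by omega) r q hrqS (by omega)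
    have hdis : Disjoint (S.filter fun f => p ≤ f.1 ∧ f.2 ≤ r)
        (S.filter fun f => r ≤ f.1 ∧ f.2 ≤ q) := by
      rw [Finset.disjoint_left]
      intro f h1 h2
      rw [Finset.mem_filter] at h1 h2
      obtain ⟨g1, g2, g3⟩ := hS f h1.1
      omega
    rw [hset, Finset.card_insert_of_notMem, Finset.card_union_of_disjoint hdis, i1, i2]
    · omega
    · simp only [Finset.mem_union, Finset.mem_filter]
      omega
  · have hV : (V.filter fun v => p ≤ v ∧ v ≤ q) = {p, q} := by
      ext v
      simp only [Finset.mem_filter, Finset.mem_insert, Finset.mem_singleton]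
      constructor
      · rintro ⟨h, h1, h2⟩
        by_contra h3
        exact hex ⟨v, h, by omega, by omega⟩
      · rintro (rfl | rfl)
        · exact ⟨hp, le_rfl, by omega⟩
        · exact ⟨hq, by omega, le_rfl⟩
    rw [hV, Finset.card_pair (by omega)] at hcard
    have hm : m = 0 := by omega
    subst hm
    have hset : (S.filter fun f => p ≤ f.1 ∧ f.2 ≤ q) = {(p, q)} := by
      ext f
      simp only [Finset.mem_filter, Finset.mem_singleton]
      constructor
      · rintro ⟨hf, h1, h2⟩
        obtain ⟨g1, g2, g3⟩ := hS f hf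
        have e1 : f.1 = p := by
          by_contra h3
          exact hex ⟨f.1, g1, by omega, by omega⟩
        have e2 : f.2 = q := by
          by_contra h3
          exact hex ⟨f.2, g2, by omega, by omega⟩
        exact Prod.ext e1 e2
      · rintro rfl
        exact ⟨hpq, le_rfl, le_rfl⟩
    rw [hset]; simp

/-- Position of a vertex of the polygon, in cyclic order. -/
def pos (n : ℕ) (ε : ℕ → Bool) (x : ℕ) : ℕ :=
  if x = 0 ∨ x = n + 2 ∨ ε x = false then x else 2 * (n + 2) - x

theorem pos_cases (n : ℕ) (ε : ℕ → Bool) (x : ℕ) (hx : x ≤ n + 2) :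
    (pos n ε x = x ∧ (x = 0 ∨ x = n + 2)) ∨ (pos n ε x = x ∧ 0 < x ∧ x < n + 2 ∧ ε x = false) ∨
      (pos n ε x = 2 * (n + 2) - x ∧ 0 < x ∧ x < n + 2 ∧ ε x = true) := by
  unfold pos
  split_ifs with h
  · by_cases h0 : x = 0 ∨ x = n + 2
    · exact Or.inl ⟨rfl, h0⟩
    · exact Or.inr (Or.inl ⟨rfl, by omega, by omega, by tauto⟩)
  · push Not at h
    exact Or.inr (Or.inr ⟨rfl, by omega, by omega, by simpa using h.2.2⟩)

/-- The chord attached to a pair. -/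
def chord (n : ℕ) (ε : ℕ → Bool) (e : ℕ × ℕ) : ℕ × ℕ :=
  (min (pos n ε e.1) (pos n ε e.2), max (pos n ε e.1) (pos n ε e.2))

/-- Crossing of chords. -/
def Inter (e f : ℕ × ℕ) : Prop := e.1 < f.1 ∧ f.1 < e.2 ∧ e.2 < f.2

theorem pos_inj {n : ℕ} {ε : ℕ → Bool} {x y : ℕ} (hx : x ≤ n + 2) (hy : y ≤ n + 2)
    (h : pos n ε x = pos n ε y) : x = y := by
  rcases pos_cases n ε x hx with h1 | h1 | h1 <;> rcases pos_cases n ε y hy with h2 | h2 | h2 <;>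
    omega

theorem bad_iff {n : ℕ} {ε : ℕ → Bool} {a b c d : ℕ} (hb : b ≤ n + 2) (hd : d ≤ n + 2)
    (hab : a < b) (hcd : c < d) :
    Bad ε (a, b) (c, d) ↔ max a c < min b d ∧
    ((a < c ∧ n + 2 < pos n ε c) ∨ (c < a ∧ pos n ε a < n + 2)) ∧
    ((d < b ∧ pos n ε d < n + 2) ∨ (b < d ∧ n + 2 < pos n ε b)) := by
  have T : ∀ x, 0 < x → x < n + 2 → (ε x = true ↔ n + 2 < pos n ε x) := by
    intro x h1 h2
    rcases pos_cases n ε x h2.le with ⟨h, h'⟩ | ⟨h, h3, h4, h'⟩ | ⟨h, h3, h4, h'⟩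
    · omega
    · simp only [h', h]
      simp; omega
    · simp only [h', h]
      simp; omega
  have F : ∀ x, 0 < x → x < n + 2 → (ε x = false ↔ pos n ε x < n + 2) := by
    intro x h1 h2
    rcases pos_cases n ε x h2.le with ⟨h, h'⟩ | ⟨h, h3, h4, h'⟩ | ⟨h, h3, h4, h'⟩
    · omega
    · simp only [h', h]
      simp; omega
    · simp only [h', h]
      simp; omega
  unfold Bad
  simp only
  refine and_congr_right fun hcap => and_congr (or_congr ?_ ?_) (or_congr ?_ ?_)
  · exact and_congr_right fun h => T c (by omega) (by omega)
  · exact and_congr_right fun h => F a (by omega) (by omega)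
  · exact and_congr_right fun h => F d (by omega) (by omega)
  · exact and_congr_right fun h => T b (by omega) (by omega)

theorem cross_aux1 {N a b c d a' b' c' d' : ℕ} (hb : b ≤ N) (hd : d ≤ N)
    (hab : a < b) (hcd : c < d) (A : a' = a ∨ (0 < a ∧ a' + a = 2 * N))
    (B : b' = b ∨ b' + b = 2 * N) (C : c' = c ∨ (0 < c ∧ c' + c = 2 * N))
    (D : d' = d ∨ d' + d = 2 * N)
    (h : max a c < min b d ∧ (a < c ∧ N < c' ∨ c < a ∧ a' < N) ∧
        (d < b ∧ d' < N ∨ b < d ∧ N < b')) :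
    (min a' b' < min c' d' ∧ min c' d' < max a' b' ∧ max a' b' < max c' d' ∨
        min c' d' < min a' b' ∧ min a' b' < max c' d' ∧ max c' d' < max a' b') := by
  obtain ⟨h0, h1 | h1, h2 | h2⟩ := h
  · have C1 : c' + c = 2 * N := by omega
    have D1 : d' = d := by omega
    rw [min_eq_right (a := c') (by omega), max_eq_left (a := c') (by omega)]
    clear C D
    rcases A with A | A <;> rcases B with B | B <;> omega
  · have C1 : c' + c = 2 * N := by omega
    have B1 : b' + b = 2 * N := by omega
    clear B C
    rcases A with A | A <;> rcases D with D | D <;> omega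
  · have A1 : a' = a := by omega
    have D1 : d' = d := by omega
    clear A D
    rcases B with B | B <;> rcases C with C | C <;> omega
  · have A1 : a' = a := by omega
    have B1 : b' + b = 2 * N := by omega
    clear A B
    rcases C with C | C <;> rcases D with D | D <;> omega

theorem cross_aux2 {N a b c d a' b' c' d' : ℕ} (hb : b ≤ N) (hd : d ≤ N)
    (hab : a < b) (hcd : c < d) (A : a' = a ∨ (0 < a ∧ a' + a = 2 * N))
    (B : b' = b ∨ b' + b = 2 * N) (C : c' = c ∨ (0 < c ∧ c' + c = 2 * N))
    (D : d' = d ∨ d' + d = 2 * N) (hac : a ≠ c) (hbd : b ≠ d)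
    (hI : min a' b' < min c' d' ∧ min c' d' < max a' b' ∧ max a' b' < max c' d') :
    (max a c < min b d ∧ (a < c ∧ N < c' ∨ c < a ∧ a' < N) ∧
        (d < b ∧ d' < N ∨ b < d ∧ N < b')) ∨
    (max c a < min d b ∧ (c < a ∧ N < a' ∨ a < c ∧ c' < N) ∧
        (b < d ∧ b' < N ∨ d < b ∧ N < d')) := by
  have k1 : ∀ a b a' b' : ℕ, b ≤ N → a < b → (a' = a ∨ (0 < a ∧ a' + a = 2 * N)) →
      (b' = b ∨ b' + b = 2 * N) →
      (a' = a ∧ min a' b' = a ∧ max a' b' = b') ∨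
      (a' + a = 2 * N ∧ min a' b' = b' ∧ max a' b' = a') := by
    clear * -
    intro a b a' b' h1 h2 h3 h4
    omega
  obtain ⟨i1, i2, i3⟩ := hI
  rcases k1 a b a' b' hb hab A B with ⟨A, m1, m2⟩ | ⟨A, m1, m2⟩ <;>
    rcases k1 c d c' d' hd hcd C D with ⟨C, m3, m4⟩ | ⟨C, m3, m4⟩ <;>
    rw [m1, m3] at i1 <;> rw [m2, m3] at i2 <;> rw [m2, m4] at i3 <;>
    clear m1 m2 m3 m4 k1 <;>
    rcases lt_or_gt_of_ne hac with h1 | h1 <;> rcases lt_or_gt_of_ne hbd with h2 | h2 <;>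
    simp only [h1, h2, h1.not_gt, h2.not_gt, true_and, false_and, or_false, false_or, max_lt_iff,
      lt_min_iff, hab, hcd, and_true] <;>
    rcases B with B | B <;> rcases D with D | D <;> first | (exfalso; omega) | omega

theorem cross_iff {n : ℕ} {ε : ℕ → Bool} {a b c d : ℕ} (hb : b ≤ n + 2) (hd : d ≤ n + 2)
    (hab : a < b) (hcd : c < d) :
    (Bad ε (a, b) (c, d) ∨ Bad ε (c, d) (a, b)) ↔
      (Inter (chord n ε (a, b)) (chord n ε (c, d)) ∨
        Inter (chord n ε (c, d)) (chord n ε (a, b))) := by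
  rw [bad_iff hb hd hab hcd, bad_iff hd hb hcd hab]
  unfold Inter chord
  simp only
  have P : ∀ x, x ≤ n + 2 → (pos n ε x = x ∨ (0 < x ∧ pos n ε x + x = 2 * (n + 2))) := by
    intro x hx
    rcases pos_cases n ε x hx with h | h | h <;> omega
  have A := P a (by omega)
  have B : pos n ε b = b ∨ pos n ε b + b = 2 * (n + 2) := (P b hb).imp id (fun h => h.2)
  have C := P c (by omega)
  have D : pos n ε d = d ∨ pos n ε d + d = 2 * (n + 2) := (P d hd).imp id (fun h => h.2)
  constructor
  · rintro (h | h)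
    · exact cross_aux1 hb hd hab hcd A B C D h
    · exact (cross_aux1 hd hb hcd hab C D A B h).symm
  · intro h
    have hac : a ≠ c := by
      intro e
      rw [e] at h
      clear * - h
      omega
    have hbd : b ≠ d := by
      intro e
      rw [e] at h
      clear * - h
      omega
    rcases h with h | h
    · exact cross_aux2 hb hd hab hcd A B C D hac hbd h
    · exact (cross_aux2 hd hb hcd hab C D A B hac.symm hbd.symm h).symm

end CambrianA

namespace CambrianA

theorem count_pairs (n : ℕ) (ε : ℕ → Bool) (S : Finset (ℕ × ℕ))
    (hval : ∀ e ∈ S, e.1 < e.2 ∧ e.2 ≤ n + 2)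
    (hnc : ∀ e ∈ S, ∀ f ∈ S, ¬Bad ε e f)
    (hmax : ∀ e : ℕ × ℕ, e.1 < e.2 → e.2 ≤ n + 2 → e ∉ S → ∃ f ∈ S, Bad ε e f ∨ Bad ε f e) :
    S.card = 2 * n + 3 := by
  have hinj : Set.InjOn (chord n ε) (S : Set (ℕ × ℕ)) := by
    rintro ⟨a, b⟩ he ⟨c, d⟩ hf h
    obtain ⟨h1, h2⟩ := hval _ he
    obtain ⟨h3, h4⟩ := hval _ hf
    simp only at h1 h2 h3 h4
    simp only [chord, Prod.mk.injEq] at h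
    have : (pos n ε a = pos n ε c ∧ pos n ε b = pos n ε d) ∨
        (pos n ε a = pos n ε d ∧ pos n ε b = pos n ε c) := by omega
    rcases this with ⟨g1, g2⟩ | ⟨g1, g2⟩
    · rw [pos_inj (by omega) (by omega) g1, pos_inj (by omega) (by omega) g2]
    · have k1 := pos_inj (by omega) (by omega) g1
      have k2 := pos_inj (by omega) (by omega) g2
      omega
  have hposinj : Set.InjOn (pos n ε) ((Finset.range (n + 3) : Finset ℕ) : Set ℕ) := by
    intro x hx y hy h
    simp only [Finset.coe_range, Set.mem_Iio] at hx hy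
    exact pos_inj (by omega) (by omega) h
  set V := (Finset.range (n + 3)).image (pos n ε) with hV
  have hVcard : V.card = n + 3 := by
    rw [hV, Finset.card_image_of_injOn hposinj, Finset.card_range]
  have hposV : ∀ x, x ≤ n + 2 → pos n ε x ∈ V := fun x hx =>
    Finset.mem_image.2 ⟨x, Finset.mem_range.2 (by omega), rfl⟩
  have hcr : ∀ e f : ℕ × ℕ, e.1 < e.2 → e.2 ≤ n + 2 → f.1 < f.2 → f.2 ≤ n + 2 →
      ((Bad ε e f ∨ Bad ε f e) ↔
        (Inter (chord n ε e) (chord n ε f) ∨ Inter (chord n ε f) (chord n ε e))) := by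
    rintro ⟨a, b⟩ ⟨c, d⟩ h1 h2 h3 h4
    exact cross_iff h2 h4 h1 h3
  have hmax' : ∀ p ∈ V, ∀ q ∈ V, p < q →
      (∀ f ∈ S.image (chord n ε), ¬(p < f.1 ∧ f.1 < q ∧ q < f.2) ∧
        ¬(f.1 < p ∧ p < f.2 ∧ f.2 < q)) → (p, q) ∈ S.image (chord n ε) := by
    intro p hp q hq hpq hf
    obtain ⟨x, hx, rfl⟩ := Finset.mem_image.1 hp
    obtain ⟨y, hy, rfl⟩ := Finset.mem_image.1 hq
    rw [Finset.mem_range] at hx hy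
    have hxy : x ≠ y := by rintro rfl; omega
    have hch : chord n ε (min x y, max x y) = (pos n ε x, pos n ε y) := by
      rcases lt_or_gt_of_ne hxy with h | h
      · rw [min_eq_left h.le, max_eq_right h.le]
        simp only [chord]
        rw [min_eq_left hpq.le, max_eq_right hpq.le]
      · rw [min_eq_right h.le, max_eq_left h.le]
        simp only [chord]
        rw [min_eq_right hpq.le, max_eq_left hpq.le]
    rw [← hch]
    apply Finset.mem_image_of_mem
    by_contra hnot
    have v1 : min x y < max x y := by omega
    have v2 : max x y ≤ n + 2 := by omega
    obtain ⟨f, hfS, hbad⟩ := hmax (min x y, max x y) v1 v2 hnot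
    obtain ⟨v3, v4⟩ := hval f hfS
    rw [hcr (min x y, max x y) f v1 v2 v3 v4, hch] at hbad
    have := hf _ (Finset.mem_image_of_mem _ hfS)
    rcases hbad with h | h
    · exact this.1 h
    · exact this.2 h
  have hpos0 : pos n ε 0 = 0 := by simp [pos]
  obtain ⟨q, hq, hqmax⟩ := Finset.exists_max_image V id ⟨_, hposV 0 (by omega)⟩
  simp only [id] at hqmax
  have h0V : 0 ∈ V := by
    have := hposV 0 (by omega)
    rwa [hpos0] at this
  have hqpos : 0 < q := by
    have h1 := hqmax _ (hposV (n + 2) le_rfl)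
    have : pos n ε (n + 2) = n + 2 := by simp [pos]
    omega
  have hS' : ∀ e ∈ S.image (chord n ε), e.1 ∈ V ∧ e.2 ∈ V ∧ e.1 < e.2 := by
    intro e he
    obtain ⟨⟨a, b⟩, heS, rfl⟩ := Finset.mem_image.1 he
    obtain ⟨h1, h2⟩ := hval _ heS
    simp only at h1 h2
    have hA := hposV a (by omega)
    have hB := hposV b (by omega)
    have hne : pos n ε a ≠ pos n ε b := fun h => by
      have := pos_inj (by omega) (by omega) h
      omega
    simp only [chord]
    refine ⟨?_, ?_, by omega⟩
    · rcases min_choice (pos n ε a) (pos n ε b) with h | h <;> rw [h] <;> assumption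
    · rcases max_choice (pos n ε a) (pos n ε b) with h | h <;> rw [h] <;> assumption
  have h0q : (0, q) ∈ S.image (chord n ε) := by
    refine hmax' 0 h0V q hq hqpos ?_
    intro f hf
    have := hqmax _ (hS' f hf).2.1
    omega
  have hnc' : ∀ e ∈ S.image (chord n ε), ∀ f ∈ S.image (chord n ε),
      ¬(e.1 < f.1 ∧ f.1 < e.2 ∧ e.2 < f.2) := by
    intro e he f hf h
    obtain ⟨e, heS, rfl⟩ := Finset.mem_image.1 he
    obtain ⟨f, hfS, rfl⟩ := Finset.mem_image.1 hf
    have v1 := hval e heS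
    have v2 := hval f hfS
    rcases (hcr e f v1.1 v1.2 v2.1 v2.2).2 (Or.inl h) with h | h
    · exact hnc e heS f hfS h
    · exact hnc f hfS e heS h
  have main := count_chords V (S.image (chord n ε)) hS' hnc' hmax' (n + 1) 0 q h0q (by
    rw [Finset.filter_true_of_mem, hVcard]
    intro v hv
    exact ⟨Nat.zero_le _, hqmax v hv⟩)
  rw [Finset.filter_true_of_mem, Finset.card_image_of_injOn hinj] at main
  · omega
  · intro f hf
    exact ⟨Nat.zero_le _, hqmax _ (hS' f hf).2.1⟩

variable {k : Type} [Field k] {n : ℕ} {ε : ℕ → Bool}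

/-- The pair attached to an indecomposable representation. -/
def ty (M : ARep k n ε) : ℕ × ℕ :=
  if h : ∃ p : ℕ × ℕ, p.1 < p.2 ∧ p.2 ≤ n + 2 ∧ ∃ e, IsInt M p.1 p.2 e then h.choose else (0, 0)

theorem ty_spec {M : ARep k n ε} (hM : M.Indec) :
    (ty M).1 < (ty M).2 ∧ (ty M).2 ≤ n + 2 ∧ ∃ e, IsInt M (ty M).1 (ty M).2 e := by
  have h : ∃ p : ℕ × ℕ, p.1 < p.2 ∧ p.2 ≤ n + 2 ∧ ∃ e, IsInt M p.1 p.2 e := by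
    obtain ⟨a, b, e, h1, h2, h3⟩ := Indec.isInt hM
    exact ⟨(a, b), h1, h2, e, h3⟩
  unfold ty
  rw [dif_pos h]
  exact h.choose_spec

theorem isInt_unique {M : ARep k n ε} {a b c d : ℕ} {e f : ∀ x, M.V x} (h1 : IsInt M a b e)
    (h2 : IsInt M c d f) (hab : a < b) (hcd : c < d) : a = c ∧ b = d := by
  apply endpoints_eq hab hcd
  intro x
  constructor
  · intro hx
    by_contra hy
    exact (h1.supp x).2 hx (h2.vzero hy _)
  · intro hx
    by_contra hy
    exact (h2.supp x).2 hx (h1.vzero hy _)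

theorem not_bad_self (e : ℕ × ℕ) : ¬Bad ε e e := by
  rintro ⟨-, (⟨h, -⟩ | ⟨h, -⟩), -⟩ <;> exact lt_irrefl _ h

theorem main_count (T : ARep k n ε) (hT : MaxAlmostRigid T) (L : List (ARep k n ε))
    (hL : ∀ M ∈ L, M.Indec) (hiso : T.Iso (dsumList k n ε L)) :
    L.length = 2 * n + 3 ∧ L.Pairwise fun A B => ¬A.Iso B := by
  have hpw := pairwise_not_iso hT.1.1 hL hiso
  refine ⟨?_, hpw⟩
  have hnd : (L.map ty).Nodup := by
    rw [List.Nodup, List.pairwise_map]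
    refine List.Pairwise.imp_of_mem ?_ hpw
    intro A B hA hB hAB hty
    obtain ⟨-, -, e, he⟩ := ty_spec (hL A hA)
    obtain ⟨-, -, f, hf⟩ := ty_spec (hL B hB)
    rw [← hty] at hf
    exact hAB (he.iso hf)
  have hmem : ∀ e ∈ (L.map ty).toFinset, ∃ M ∈ L, ty M = e := by
    intro e he
    simpa using he
  have hsum : ∀ M ∈ L, M.IsSummand T := fun M hM =>
    isSummand_iff_ret.2 ((ret_mem hM).trans (ret_of_iso hiso).2)
  rw [← List.length_map (as := L) ty, ← List.toFinset_card_of_nodup hnd]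
  apply count_pairs n ε
  · intro e he
    obtain ⟨M, hM, rfl⟩ := hmem e he
    have := ty_spec (hL M hM)
    exact ⟨this.1, this.2.1⟩
  · intro e he f hf hbad
    obtain ⟨A, hA, rfl⟩ := hmem e he
    obtain ⟨B, hB, rfl⟩ := hmem f hf
    obtain ⟨-, -, eA, heA⟩ := ty_spec (hL A hA)
    obtain ⟨-, -, eB, heB⟩ := ty_spec (hL B hB)
    rcases hT.1.2 A B (hL A hA) (hL B hB) (hsum A hA) (hsum B hB) with h | h
    · exact bad_not_extZero heA heB hbad h
    · exact bad_not_extOne heA heB hbad h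
  · rintro ⟨a, b⟩ hab hb hnot
    simp only at hab hb
    by_contra hcon
    push Not at hcon
    obtain ⟨e, he⟩ := intervalRep_isInt (k := k) (n := n) (ε := ε) a b hb
    set M := intervalRep k n ε (a + 1) b with hM
    have hMind : M.Indec := he.indec hab
    have htyM : ty M = (a, b) := by
      obtain ⟨h1, -, f, hf⟩ := ty_spec hMind
      obtain ⟨e1, e2⟩ := isInt_unique hf he h1 hab
      exact Prod.ext e1 e2
    have hL' : ∀ N ∈ M :: L, (ty N).1 < (ty N).2 ∧ ∃ e, IsInt N (ty N).1 (ty N).2 e := by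
      intro N hN
      have hNi : N.Indec := by
        rcases List.mem_cons.1 hN with rfl | h
        · exact hMind
        · exact hL N h
      exact ⟨(ty_spec hNi).1, (ty_spec hNi).2.2⟩
    have hnd' : ((M :: L).map ty).Nodup := by
      rw [List.map_cons, List.nodup_cons]
      refine ⟨?_, hnd⟩
      rw [htyM]
      simpa using hnot
    have hret : Ret (T.dsum M) (dsumList k n ε (M :: L)) :=
      (ret_swap T M).trans (Ret.dsum (Ret.refl M) (ret_of_iso hiso).1)
    have hnb : ∀ A ∈ M :: L, ∀ B ∈ M :: L, ¬Bad ε (ty A) (ty B) := by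
      have hin : ∀ A ∈ L, ty A ∈ (L.map ty).toFinset := by
        intro A hA
        rw [List.mem_toFinset]
        exact List.mem_map_of_mem hA
      intro A hA B hB
      rcases List.mem_cons.1 hA with rfl | hA
      · rcases List.mem_cons.1 hB with h | hB
        · rw [h]; exact not_bad_self _
        · rw [htyM]
          exact (hcon _ (hin B hB)).1
      · rcases List.mem_cons.1 hB with rfl | hB
        · rw [htyM]
          exact (hcon _ (hin A hA)).2
        · intro hbad
          obtain ⟨-, -, eA, heA⟩ := ty_spec (hL A hA)
          obtain ⟨-, -, eB, heB⟩ := ty_spec (hL B hB)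
          rcases hT.1.2 A B (hL A hA) (hL B hB) (hsum A hA) (hsum B hB) with h | h
          · exact bad_not_extZero heA heB hbad h
          · exact bad_not_extOne heA heB hbad h
    refine hT.2 M hMind.1 ⟨basic_of_ret ty (M :: L) hL' hnd' hret, ?_⟩
    intro A B hA hB hAs hBs
    obtain ⟨hA1, -, eA, heA⟩ := ty_spec hA
    obtain ⟨hB1, -, eB, heB⟩ := ty_spec hB
    obtain ⟨A', hA', hAA⟩ := type_of_ret ty (M :: L) hL'
      ((isSummand_iff_ret.1 hAs).trans hret) heA hA1
    obtain ⟨B', hB', hBB⟩ := type_of_ret ty (M :: L) hL'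
      ((isSummand_iff_ret.1 hBs).trans hret) heB hB1
    refine ext_of_not_bad heA heB hA1 hB1 ?_
    have := hnb A' hA' B' hB'
    rwa [hAA, hBB] at this

end CambrianA

namespace CambrianA

/-- every maximal almost rigid representation of `Q` has exactly `2n+3`
pairwise non-isomorphic indecomposable direct summands. -/
theorem stmt_10 (k : Type) [Field k] (n : ℕ) (ε : ℕ → Bool) (T : ARep k n ε)
    (hT : MaxAlmostRigid T) :
    ∀ L : List (ARep k n ε), (∀ M ∈ L, M.Indec) → T.Iso (dsumList k n ε L) →
      L.length = 2 * n + 3 ∧ L.Pairwise fun A B => ¬A.Iso B := by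
  exact main_count T hT

end CambrianA
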